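/- Let n ≥ 3 and let Ω ⊂ ℝⁿ be a smooth bounded strictly convex domain. Suppose u ∈ C^∞(ℝⁿ∖Ω) solves Δu = 0 in ℝⁿ∖Ω̄, u = 1 on ∂Ω, u(x) → 0 as |x| → ∞, and that Du(x) ≠ 0 for all x ∈ ℝⁿ∖Ω. For x ∈ ℝⁿ∖Ω̄ let K(x) denote the Gaussian curvature of the level set {y : u(y) = u(x)} through x, given by the formula K(x) = (−1)^{n−1} |Du(x)|^{−(n+1)} Σ_{α,β=1}^{n} cof(D²u(x))_{αβ} u_α(x) u_β(x), where cof(D²u)_{αβ} = ∂det(D²u)/∂u_{αβ} denotes the cofactor matrix of the Hessian. Then, as |x| → ∞, K(x) = |x|^{1−n} + O(|x|^{−n}). -/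

import Mathlib

open scoped Classical Topology
open Real Filter MeasureTheory

noncomputable section

/-- Euclidean space ℝⁿ. -/
abbrev Euc (n : ℕ) : Type := EuclideanSpace ℝ (Fin n)

/-- The standard basis vector `e i`. -/
def ebasis (n : ℕ) (i : Fin n) : Euc n := EuclideanSpace.single i 1

/-- The Hessian matrix `D²u(x)`. -/
def hessMat (n : ℕ) (u : Euc n → ℝ) (x : Euc n) : Matrix (Fin n) (Fin n) ℝ :=
  Matrix.of fun i j => iteratedFDeriv ℝ 2 u x ![ebasis n i, ebasis n j]

/-- The Laplacian `Δu(x)` (trace of the Hessian). -/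
def lapl (n : ℕ) (u : Euc n → ℝ) (x : Euc n) : ℝ := ∑ i, hessMat n u x i i

/-- The `k`-th elementary symmetric function of the eigenvalues of an `n × n` matrix,
expressed through the coefficients of the characteristic polynomial. -/
def matSk (n k : ℕ) (M : Matrix (Fin n) (Fin n) ℝ) : ℝ :=
  (-1 : ℝ) ^ k * (Matrix.charpoly M).coeff (n - k)

/-- `S_k(D²u)(x)`. -/
def SkHess (n k : ℕ) (u : Euc n → ℝ) (x : Euc n) : ℝ := matSk n k (hessMat n u x)

/-- `u` is `k`-convex on `U`: the eigenvalues of the Hessian lie in the Gårding cone `Γ_k`. -/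
def KConvexOn (n k : ℕ) (u : Euc n → ℝ) (U : Set (Euc n)) : Prop :=
  ∀ x ∈ U, ∀ j : ℕ, 1 ≤ j → j ≤ k → 0 < matSk n j (hessMat n u x)

/-- Membership in the class `𝒜_k`: symmetric positive definite with `S_k(λ(A)) = 1`. -/
def MemA (n k : ℕ) (A : Matrix (Fin n) (Fin n) ℝ) : Prop :=
  A.IsSymm ∧ A.PosDef ∧ matSk n k A = 1

/-- The quadratic form `½ xᵀ A x`. -/
def quadA (n : ℕ) (A : Matrix (Fin n) (Fin n) ℝ) (x : Euc n) : ℝ :=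
  (1 / 2) * ∑ i, ∑ j, x i * A i j * x j

/-- The linear form `b ⋅ x`. -/
def linB (n : ℕ) (b x : Euc n) : ℝ := ∑ i, b i * x i

/-- `λ_max(A) < c`, expressed through the quadratic form (for symmetric `A`). -/
def lambdaMaxLT (n : ℕ) (A : Matrix (Fin n) (Fin n) ℝ) (c : ℝ) : Prop :=
  ∀ x : Euc n, x ≠ 0 → ∑ i, ∑ j, x i * A i j * x j < c * ‖x‖ ^ 2

/-- `u` is smooth on an open neighbourhood of the (closed) set `S`;
this is our rendering of `u ∈ C^∞(S)` for a closed set `S`. -/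
def SmoothOnNhd (n : ℕ) (u : Euc n → ℝ) (S : Set (Euc n)) : Prop :=
  ∃ U : Set (Euc n), IsOpen U ∧ S ⊆ U ∧ ContDiffOn ℝ (⊤ : ℕ∞) u U

/-- A smooth bounded strictly convex domain in ℝⁿ. -/
def SmoothStrictConvexDomain (n : ℕ) (Ω : Set (Euc n)) : Prop :=
  IsOpen Ω ∧ Bornology.IsBounded Ω ∧ Ω.Nonempty ∧ Convex ℝ Ω ∧ StrictConvex ℝ Ω ∧
    ∃ f : Euc n → ℝ, ContDiff ℝ (⊤ : ℕ∞) f ∧ Ω = {x | f x < 0} ∧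
      ∀ x ∈ frontier Ω, fderiv ℝ f x ≠ 0

/-- Extension of `u` by the constant value `v` inside `Ω`. -/
def extBy (n : ℕ) (Ω : Set (Euc n)) (v : ℝ) (u : Euc n → ℝ) : Euc n → ℝ :=
  fun x => if x ∈ Ω then v else u x

/-- `u` (vanishing on `∂Ω`) is quasiconvex: all sublevel sets of its zero-extension are convex. -/
def QuasiconvexSol (n : ℕ) (Ω : Set (Euc n)) (u : Euc n → ℝ) : Prop :=
  ∀ t : ℝ, Convex ℝ {x : Euc n | extBy n Ω 0 u x ≤ t}

/-- The `k`-th elementary symmetric polynomial of a vector `a ∈ ℝⁿ`. -/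
def esymmVec (n k : ℕ) (a : Fin n → ℝ) : ℝ :=
  ∑ s ∈ Finset.powersetCard k (Finset.univ : Finset (Fin n)), ∏ i ∈ s, a i

/-- `h_k(a) = max_i S_{k-1}(a)|_{a_i = 0} · a_i`. -/
def hkfun (n k : ℕ) (a : Fin n → ℝ) : ℝ :=
  ⨆ i : Fin n, esymmVec n (k - 1) (Function.update a i 0) * a i

/-- The exponent `-k / (2 h_k(a))`. -/
def genExp (n k : ℕ) (a : Fin n → ℝ) : ℝ := -(k : ℝ) / (2 * hkfun n k a)

/-- The integrand `(1 + α t^{-k/(2h_k(a))})^{1/k}`. -/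
def genInt (n k : ℕ) (a : Fin n → ℝ) (α t : ℝ) : ℝ :=
  (1 + α * t ^ genExp n k a) ^ ((1 : ℝ) / (k : ℝ))

/-- The generalized symmetric function `ū`. -/
def ubar (n k : ℕ) (a : Fin n → ℝ) (R₀ α : ℝ) (x : Euc n) : ℝ :=
  ∫ t in R₀..(quadA n (Matrix.diagonal a) x), genInt n k a α t

/-- `μ(α) = ∫_{R₀}^∞ ((1 + α t^{-k/(2h_k(a))})^{1/k} - 1) dt - R₀`. -/
def muA (n k : ℕ) (a : Fin n → ℝ) (R₀ α : ℝ) : ℝ :=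
  (∫ t in Set.Ioi R₀, (genInt n k a α t - 1)) - R₀

/-- The ellipsoid `E_R(xb) = {x : ½ (x - xb)ᵀ A (x - xb) < R}`. -/
def ESet (n : ℕ) (A : Matrix (Fin n) (Fin n) ℝ) (xb : Euc n) (R : ℝ) : Set (Euc n) :=
  {x : Euc n | quadA n A (x - xb) < R}

/-- The non-concentric convex ring `Ω_R^ε = E_R(0) ∖ B̄_ε(x₀)`. -/
def OmegaRe (n : ℕ) (a : Fin n → ℝ) (x₀ : Euc n) (ε R : ℝ) : Set (Euc n) :=
  ESet n (Matrix.diagonal a) 0 R \ closure (Metric.ball x₀ ε)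

/-- `u` is a `k`-convex solution of the approximating problem
`S_k(D²u) = 1` in `Ω_R^ε`, `u = 0` on `∂B_ε(x₀)`, `u = ū` on `∂E_R(0)`. -/
def ApproxSol (n k : ℕ) (a : Fin n → ℝ) (x₀ : Euc n) (ε R R₀ α : ℝ)
    (u : Euc n → ℝ) : Prop :=
  SmoothOnNhd n u (closure (OmegaRe n a x₀ ε R)) ∧
  KConvexOn n k u (OmegaRe n a x₀ ε R) ∧
  (∀ x ∈ OmegaRe n a x₀ ε R, SkHess n k u x = 1) ∧
  (∀ x ∈ Metric.sphere x₀ ε, u x = 0) ∧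
  (∀ x : Euc n, quadA n (Matrix.diagonal a) x = R → u x = ubar n k a R₀ α x)

/-- The constant `C_ε` of the boundary gradient estimate. -/
def Ceps (n k : ℕ) (C ε : ℝ) : ℝ :=
  if 2 * k < n then C * ((n : ℝ) / (k : ℝ) - 2) * ε⁻¹
  else if 2 * k = n then C * ε⁻¹ * |Real.log ε|⁻¹
  else C * (2 - (n : ℝ) / (k : ℝ)) * ε ^ (1 - (n : ℝ) / (k : ℝ))

/-- `u` is a `k`-convex solution of the exterior Dirichlet problem
`S_k(D²u) = 1` in `ℝⁿ ∖ B̄_ε(x₀)`, `u = 0` on `∂B_ε(x₀)`, with quadratic asymptotics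
`½ xᵀAx + c` at infinity (`A = diag a`). -/
def ExtBallSol (n k : ℕ) (a : Fin n → ℝ) (x₀ : Euc n) (ε c : ℝ) (u : Euc n → ℝ) : Prop :=
  SmoothOnNhd n u (Metric.ball x₀ ε)ᶜ ∧
  KConvexOn n k u (closure (Metric.ball x₀ ε))ᶜ ∧
  (∀ x ∈ (closure (Metric.ball x₀ ε))ᶜ, SkHess n k u x = 1) ∧
  (∀ x ∈ Metric.sphere x₀ ε, u x = 0) ∧
  Tendsto (fun x : Euc n => u x - (quadA n (Matrix.diagonal a) x + c))
    (cocompact (Euc n)) (𝓝 0)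

/-- `u` is a `k`-convex solution of the exterior Dirichlet problem on `ℝⁿ ∖ Ω₀` with
asymptotics `½ xᵀAx + b·x + c` at infinity. -/
def ExtDomSol (n k : ℕ) (Ω₀ : Set (Euc n)) (A : Matrix (Fin n) (Fin n) ℝ) (b : Euc n)
    (c : ℝ) (u : Euc n → ℝ) : Prop :=
  SmoothOnNhd n u Ω₀ᶜ ∧
  KConvexOn n k u (closure Ω₀)ᶜ ∧
  (∀ x ∈ (closure Ω₀)ᶜ, SkHess n k u x = 1) ∧
  (∀ x ∈ frontier Ω₀, u x = 0) ∧
  Tendsto (fun x : Euc n => u x - (quadA n A x + linB n b x + c))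
    (cocompact (Euc n)) (𝓝 0)

/-- `u` is a solution of the exterior Dirichlet problem for the Laplace equation
`Δu = 1` on `ℝⁿ ∖ Ω₀` with asymptotics `½ xᵀAx + b·x + c` at infinity. -/
def ExtDomSolLap (n : ℕ) (Ω₀ : Set (Euc n)) (A : Matrix (Fin n) (Fin n) ℝ) (b : Euc n)
    (c : ℝ) (u : Euc n → ℝ) : Prop :=
  SmoothOnNhd n u Ω₀ᶜ ∧
  (∀ x ∈ (closure Ω₀)ᶜ, lapl n u x = 1) ∧
  (∀ x ∈ frontier Ω₀, u x = 0) ∧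
  Tendsto (fun x : Euc n => u x - (quadA n A x + linB n b x + c))
    (cocompact (Euc n)) (𝓝 0)

/-- `u` solves the exterior problem `Δu = 0` in `ℝⁿ ∖ Ω̄`, `u = 1` on `∂Ω`,
`u → 0` at infinity. -/
def HarmExtSol (n : ℕ) (Ω : Set (Euc n)) (u : Euc n → ℝ) : Prop :=
  SmoothOnNhd n u Ωᶜ ∧
  (∀ x ∈ (closure Ω)ᶜ, lapl n u x = 0) ∧
  (∀ x ∈ frontier Ω, u x = 1) ∧
  Tendsto u (cocompact (Euc n)) (𝓝 0)

end

/-- The Gaussian curvature of the level set of `u` through `x`: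
`K = (-1)^{n-1} |Du|^{-(n+1)} Σ_{α,β} cof(D²u)_{αβ} u_α u_β`
(for the symmetric Hessian, the cofactor matrix is the adjugate). -/
noncomputable def gaussK (n : ℕ) (u : Euc n → ℝ) (x : Euc n) : ℝ :=
  (-1 : ℝ) ^ (n - 1) * ‖fderiv ℝ u x‖ ^ (-((n : ℝ) + 1)) *
    ∑ α : Fin n, ∑ β : Fin n,
      (hessMat n u x).adjugate α β * fderiv ℝ u x (ebasis n α) * fderiv ℝ u x (ebasis n β)

lemma hessMat_apply' (n : ℕ) (u : Euc n → ℝ) (x : Euc n) (i j : Fin n) :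
    hessMat n u x i j = fderiv ℝ (fderiv ℝ u) x (ebasis n i) (ebasis n j) := by
  simp [hessMat, iteratedFDeriv_two_apply]

lemma lapl_eq' (n : ℕ) (u : Euc n → ℝ) (x : Euc n) :
    lapl n u x = ∑ i, fderiv ℝ (fderiv ℝ u) x (ebasis n i) (ebasis n i) := by
  simp [lapl, hessMat_apply']

lemma line_deriv_facts {E : Type*} [NormedAddCommGroup E] [NormedSpace ℝ E] {h : E → ℝ} {x : E}
    (hh : ContDiffAt ℝ 2 h x) (a : E) :
    deriv (fun t : ℝ => h (x + t • a)) 0 = fderiv ℝ h x a ∧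
    deriv (deriv (fun t : ℝ => h (x + t • a))) 0 = fderiv ℝ (fderiv ℝ h) x a a := by
  have hl : ∀ t : ℝ, HasDerivAt (fun t : ℝ => x + t • a) a t := fun t => by
    simpa using ((hasDerivAt_id t).smul_const a).const_add x
  have hev : ∀ᶠ y in 𝓝 x, DifferentiableAt ℝ h y := by
    filter_upwards [hh.eventually (by simp)] with y hy
    exact hy.differentiableAt (by simp)
  have hcont : Tendsto (fun t : ℝ => x + t • a) (𝓝 0) (𝓝 x) := by
    have := (hl 0).continuousAt.tendsto
    simpa using this
  have hd : ∀ᶠ t in 𝓝 (0:ℝ), deriv (fun t : ℝ => h (x + t • a)) t = fderiv ℝ h (x + t • a) a := by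
    filter_upwards [hcont.eventually hev] with t ht
    exact (ht.hasFDerivAt.comp_hasDerivAt t (hl t)).deriv
  refine ⟨by simpa using hd.self_of_nhds, ?_⟩
  rw [Filter.EventuallyEq.deriv_eq hd]
  have h2 : DifferentiableAt ℝ (fderiv ℝ h) x :=
    (hh.fderiv_right (m := 1) (by norm_num)).differentiableAt (by simp)
  have h3 : HasDerivAt (fun t : ℝ => fderiv ℝ h (x + t • a)) (fderiv ℝ (fderiv ℝ h) x a) 0 := by
    have : HasFDerivAt (fderiv ℝ h) (fderiv ℝ (fderiv ℝ h) x) (x + (0:ℝ) • a) := by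
      simpa using h2.hasFDerivAt
    exact this.comp_hasDerivAt 0 (hl 0)
  have := h3.clm_apply (hasDerivAt_const (0:ℝ) a)
  simpa using this.deriv

lemma hess_nonneg_of_localMin {E : Type*} [NormedAddCommGroup E] [NormedSpace ℝ E] {h : E → ℝ}
    {x : E} (hh : ContDiffAt ℝ 2 h x) (hm : IsLocalMin h x) (a : E) :
    0 ≤ fderiv ℝ (fderiv ℝ h) x a a := by
  by_contra! hneg
  obtain ⟨h1, h2⟩ := line_deriv_facts hh a
  have hcont : ContinuousAt (fun t : ℝ => x + t • a) 0 := by fun_prop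
  have hcont' : Tendsto (fun t : ℝ => x + t • a) (𝓝 0) (𝓝 x) := by simpa using hcont.tendsto
  have hc : ContinuousAt (fun t : ℝ => h (x + t • a)) 0 := by
    apply ContinuousAt.comp _ hcont
    simpa using hh.continuousAt
  have hmax := isLocalMax_of_deriv_deriv_neg (f := fun t : ℝ => h (x + t • a)) (x₀ := 0)
    (by rw [h2]; exact hneg) (by rw [h1, hm.fderiv_eq_zero]; simp) hc
  have hmin : ∀ᶠ t in 𝓝 (0:ℝ), h x ≤ h (x + t • a) := hcont'.eventually hm
  have heq : (fun t : ℝ => h (x + t • a)) =ᶠ[𝓝 0] fun _ => h x := by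
    filter_upwards [hmin, hmax] with t ht ht'
    simp at ht'
    exact le_antisymm ht' ht
  have : deriv (deriv (fun t : ℝ => h (x + t • a))) 0 = 0 := by
    rw [heq.deriv.deriv_eq]; simp
  rw [this] at h2
  linarith

/-- strict maximum principle -/
lemma strictMP (n : ℕ) (F : Set (Euc n)) (hF : IsClosed F) (h : Euc n → ℝ)
    (hc : ContinuousOn h F) (hlim : Tendsto h (cocompact (Euc n)) (𝓝 0))
    (H : ∀ x ∈ F, 0 ≤ h x ∨ (F ∈ 𝓝 x ∧ ContDiffAt ℝ 2 h x ∧ lapl n h x < 0)) :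
    ∀ x ∈ F, 0 ≤ h x := by
  intro x hx
  by_contra! hneg
  obtain ⟨K, hK, hKc⟩ := mem_cocompact.1 (hlim.eventually (lt_mem_nhds (show h x < 0 from hneg)))
  have hxK : x ∈ K := by
    by_contra hxK
    have h1 : h x < h x := hKc hxK
    exact lt_irrefl _ h1
  obtain ⟨z, hz, hzmin⟩ := (hK.inter_left hF).exists_isMinOn ⟨x, hx, hxK⟩
    (hc.mono Set.inter_subset_left)
  have hzx : h z ≤ h x := hzmin ⟨hx, hxK⟩
  have hmin : ∀ y ∈ F, h z ≤ h y := by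
    intro y hy
    by_cases hyK : y ∈ K
    · exact hzmin ⟨hy, hyK⟩
    · exact hzx.trans (le_of_lt (hKc hyK))
  rcases H z hz.1 with h0 | ⟨hn, hcd, hl⟩
  · linarith
  · have hlm : IsLocalMin h z := by
      filter_upwards [hn] with y hy using hmin y hy
    rw [lapl_eq'] at hl
    have := Finset.sum_nonneg (s := Finset.univ) fun i _ =>
      hess_nonneg_of_localMin hcd hlm (ebasis n i)
    linarith

lemma fderiv_fderiv_add {E F : Type*} [NormedAddCommGroup E] [NormedSpace ℝ E]
    [NormedAddCommGroup F] [NormedSpace ℝ F] {f g : E → F} {x : E}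
    (hf : ContDiffAt ℝ 2 f x) (hg : ContDiffAt ℝ 2 g x) :
    fderiv ℝ (fderiv ℝ (fun y => f y + g y)) x
      = fderiv ℝ (fderiv ℝ f) x + fderiv ℝ (fderiv ℝ g) x := by
  have : fderiv ℝ (fun y => f y + g y) =ᶠ[𝓝 x] fun y => fderiv ℝ f y + fderiv ℝ g y := by
    filter_upwards [hf.eventually (by simp), hg.eventually (by simp)] with y h1 h2
    exact fderiv_fun_add (h1.differentiableAt (by simp)) (h2.differentiableAt (by simp))
  rw [this.fderiv_eq]
  exact fderiv_fun_add ((hf.fderiv_right (m := 1) (by norm_num)).differentiableAt (by simp))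
    ((hg.fderiv_right (m := 1) (by norm_num)).differentiableAt (by simp))

lemma fderiv_fderiv_const_mul {E : Type*} [NormedAddCommGroup E] [NormedSpace ℝ E]
    {f : E → ℝ} {x : E} (c : ℝ) (hf : ContDiffAt ℝ 2 f x) :
    fderiv ℝ (fderiv ℝ (fun y => c * f y)) x = c • fderiv ℝ (fderiv ℝ f) x := by
  have : fderiv ℝ (fun y => c * f y) =ᶠ[𝓝 x] fun y => c • fderiv ℝ f y := by
    filter_upwards [hf.eventually (by simp)] with y h1
    exact fderiv_const_mul (h1.differentiableAt (by simp)) c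
  rw [this.fderiv_eq]
  exact fderiv_fun_const_smul ((hf.fderiv_right (m := 1) (by norm_num)).differentiableAt (by simp)) c

lemma lapl_add (n : ℕ) {f g : Euc n → ℝ} {x : Euc n}
    (hf : ContDiffAt ℝ 2 f x) (hg : ContDiffAt ℝ 2 g x) :
    lapl n (fun y => f y + g y) x = lapl n f x + lapl n g x := by
  simp only [lapl_eq', fderiv_fderiv_add hf hg, _root_.add_apply,
    Finset.sum_add_distrib]

lemma lapl_const_mul (n : ℕ) {f : Euc n → ℝ} {x : Euc n} (c : ℝ)
    (hf : ContDiffAt ℝ 2 f x) :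
    lapl n (fun y => c * f y) x = c * lapl n f x := by
  simp only [lapl_eq', fderiv_fderiv_const_mul c hf, _root_.smul_apply,
    Finset.mul_sum, smul_eq_mul]

lemma lapl_congr (n : ℕ) {f g : Euc n → ℝ} {x : Euc n} (h : f =ᶠ[𝓝 x] g) :
    lapl n f x = lapl n g x := by
  simp only [lapl_eq', (h.fderiv).fderiv_eq]

/-- uniform Lipschitz bound near a compact set -/
lemma lip_near_compact {E F : Type*} [NormedAddCommGroup E] [NormedSpace ℝ E] [ProperSpace E]
    [NormedAddCommGroup F] [NormedSpace ℝ F] {U K : Set E} (hU : IsOpen U) (hK : IsCompact K)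
    (hKU : K ⊆ U) {Q : E → F} (hQ : ContDiffOn ℝ 1 Q U) :
    ∃ C δ : ℝ, 0 < C ∧ 0 < δ ∧ ∀ k ∈ K, ∀ z, ‖z - k‖ ≤ δ → z ∈ U ∧
      ‖fderiv ℝ Q z‖ ≤ C ∧ ‖Q z - Q k‖ ≤ C * ‖z - k‖ := by
  obtain ⟨δ, hδ, hsub⟩ := hK.exists_cthickening_subset_open hU hKU
  have hcomp : IsCompact (Metric.cthickening δ K) := hK.cthickening
  have hcont : ContinuousOn (fderiv ℝ Q) (Metric.cthickening δ K) :=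
    (hQ.continuousOn_fderiv_of_isOpen hU (by simp)).mono hsub
  obtain ⟨C, hC⟩ := hcomp.exists_bound_of_continuousOn hcont
  have hmem : ∀ k ∈ K, ∀ z, ‖z - k‖ ≤ δ → z ∈ Metric.cthickening δ K := by
    intro k hk z hz
    exact Metric.mem_cthickening_of_dist_le z k δ K hk (by rwa [dist_eq_norm])
  refine ⟨max C 1, δ, by positivity, hδ, fun k hk z hz => ⟨hsub (hmem k hk z hz),
    (hC z (hmem k hk z hz)).trans (le_max_left _ _), ?_⟩⟩
  have hconv : Convex ℝ (Metric.closedBall k δ) := convex_closedBall k δ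
  refine hconv.norm_image_sub_le_of_norm_fderiv_le (𝕜 := ℝ) (f := Q) (fun y hy => ?_) (fun y hy => ?_)
    (Metric.mem_closedBall_self hδ.le) (by simpa [dist_eq_norm] using hz)
  · have : y ∈ U := hsub (hmem k hk y (by simpa [dist_eq_norm] using hy))
    exact (hQ.contDiffAt (hU.mem_nhds this)).differentiableAt (by simp)
  · exact (hC y (hmem k hk y (by simpa [dist_eq_norm] using hy))).trans (le_max_left _ _)

/-- differentiation under the integral for a convolution -/
lemma conv_hasFDerivAt {n : ℕ} {F : Type*} [NormedAddCommGroup F] [NormedSpace ℝ F]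
    [CompleteSpace F] {f : Euc n → ℝ} (hf : Continuous f) (R : ℝ) {U : Set (Euc n)}
    (hU : IsOpen U) {g : Euc n → F} (hg : ContDiffOn ℝ 1 g U) (x : Euc n)
    (hx : ∀ y ∈ Metric.closedBall (0 : Euc n) R, x - y ∈ U) :
    HasFDerivAt (fun x => ∫ y in Metric.closedBall (0 : Euc n) R, f y • g (x - y))
      (∫ y in Metric.closedBall (0 : Euc n) R, f y • fderiv ℝ g (x - y)) x := by
  set B := Metric.closedBall (0 : Euc n) R
  have hB : IsCompact B := isCompact_closedBall _ _
  have hBm : MeasurableSet B := hB.measurableSet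
  have hK : IsCompact (Set.image (fun y => x - y) B) := hB.image (by fun_prop)
  obtain ⟨C, δ, hC, hδ, hlip⟩ := lip_near_compact hU hK (by rintro _ ⟨y, hy, rfl⟩; exact hx y hy) hg
  have hmem : ∀ x' ∈ Metric.ball x δ, ∀ y ∈ B, x' - y ∈ U ∧ ‖fderiv ℝ g (x' - y)‖ ≤ C := by
    intro x' hx' y hy
    have := hlip (x - y) ⟨y, hy, rfl⟩ (x' - y) (by
      simp only [Metric.mem_ball, dist_eq_norm] at hx'
      simpa using hx'.le)
    exact ⟨this.1, this.2.1⟩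
  have hgc : ContinuousOn (fderiv ℝ g) U := hg.continuousOn_fderiv_of_isOpen hU (by simp)
  have hc1 : ∀ x' ∈ Metric.ball x δ, ContinuousOn (fun y => f y • g (x' - y)) B := by
    intro x' hx'
    refine hf.continuousOn.smul (hg.continuousOn.comp (by fun_prop) ?_)
    intro y hy; exact (hmem x' hx' y hy).1
  have hc2 : ContinuousOn (fun y => f y • fderiv ℝ g (x - y)) B := by
    refine hf.continuousOn.smul (hgc.comp (by fun_prop) ?_)
    intro y hy; exact hx y hy
  apply hasFDerivAt_integral_of_dominated_of_fderiv_le (s := Metric.ball x δ)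
    (F' := fun x y => f y • fderiv ℝ g (x - y)) (bound := fun y => ‖f y‖ * C)
  · exact Metric.ball_mem_nhds x hδ
  · filter_upwards [Metric.ball_mem_nhds x hδ] with x' hx'
    exact (hc1 x' hx').aestronglyMeasurable hBm
  · exact (hc1 x (Metric.mem_ball_self hδ)).integrableOn_compact hB
  · exact hc2.aestronglyMeasurable hBm
  · refine (ae_restrict_iff' hBm).2 (ae_of_all _ fun y hy x' hx' => ?_)
    rw [norm_smul]
    exact mul_le_mul_of_nonneg_left (hmem x' hx' y hy).2 (norm_nonneg _)
  · exact ((hf.norm.mul continuous_const).continuousOn).integrableOn_compact hB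
  · refine (ae_restrict_iff' hBm).2 (ae_of_all _ fun y hy x' hx' => ?_)
    have hd : HasFDerivAt g (fderiv ℝ g (x' - y)) (x' - y) :=
      ((hg.contDiffAt (hU.mem_nhds (hmem x' hx' y hy).1)).differentiableAt (by simp)).hasFDerivAt
    have h2 := (hd.comp x' ((hasFDerivAt_id x').sub_const y)).const_smul (f y)
    rw [ContinuousLinearMap.comp_id] at h2
    exact h2

/-- homogeneous functions -/
lemma homog_lip {n : ℕ} {F : Type*} [NormedAddCommGroup F] [NormedSpace ℝ F]
    {H : Euc n → F} (hH : ContDiffOn ℝ 1 H {0}ᶜ) (m : ℝ)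
    (hom : ∀ t : ℝ, 0 < t → ∀ z, z ≠ 0 → H (t • z) = t ^ m • H z) (R : ℝ) (hR : 0 < R) :
    ∃ C ρ : ℝ, 0 < C ∧ 0 < ρ ∧ ∀ x y : Euc n, ‖y‖ ≤ R → ρ ≤ ‖x‖ → x - y ≠ 0 ∧ 
      ‖H (x - y) - H x‖ ≤ C * ‖x‖ ^ (m - 1) := by
  obtain ⟨C, δ, hC, hδ, hlip⟩ := lip_near_compact (U := {0}ᶜ) (K := Metric.sphere (0 : Euc n) 1)
    isOpen_compl_singleton (isCompact_sphere _ _) (by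
      intro z hz
      have : ‖z‖ = 1 := by simpa using hz
      simp only [Set.mem_compl_iff, Set.mem_singleton_iff]
      rintro rfl
      simp at this) hH
  refine ⟨C * R, R / δ, by positivity, by positivity, fun x y hy hx => ?_⟩
  have hx0 : 0 < ‖x‖ := lt_of_lt_of_le (by positivity) hx
  have hxne : x ≠ 0 := norm_pos_iff.1 hx0
  set t := ‖x‖
  have hw : ∀ w : Euc n, t • (t⁻¹ • w) = w := fun w => by
    rw [smul_smul, mul_inv_cancel₀ hx0.ne', one_smul]
  have hdiff : ‖(t⁻¹ • (x - y)) - t⁻¹ • x‖ ≤ t⁻¹ * R := by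
    rw [← smul_sub, norm_smul]
    simp only [sub_sub_cancel_left, norm_neg, norm_inv, Real.norm_eq_abs, abs_of_pos hx0]
    gcongr
  have hdiff' : t⁻¹ * R ≤ δ := by
    rw [div_le_iff₀ hδ] at hx
    rw [inv_mul_le_iff₀ hx0]; linarith
  obtain ⟨h1, -, h3⟩ := hlip (t⁻¹ • x) (by
    simp [norm_smul, t, hxne]) (t⁻¹ • (x - y)) (hdiff.trans hdiff')
  have hne : x - y ≠ 0 := by
    rintro h0; simp [h0] at h1
  refine ⟨hne, ?_⟩
  have e1 : H (x - y) = t ^ m • H (t⁻¹ • (x - y)) := by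
    rw [← hom t hx0 _ h1, hw]
  have e2 : H x = t ^ m • H (t⁻¹ • x) := by
    rw [← hom t hx0 _ (by simp [hxne, hx0.ne']), hw]
  rw [e1, e2, ← smul_sub, norm_smul, Real.norm_eq_abs, abs_of_pos (Real.rpow_pos_of_pos hx0 _),
    Real.rpow_sub_one hx0.ne']
  calc t ^ m * _ ≤ t ^ m * (C * (t⁻¹ * R)) := by gcongr; exact h3.trans (by gcongr)
    _ = _ := by field_simp

/-- `(‖z‖² + s)^q` -/
noncomputable def Pw (n : ℕ) (q s : ℝ) (z : Euc n) : ℝ := (‖z‖ ^ 2 + s) ^ q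

lemma Pw_contDiffAt (n : ℕ) (q s : ℝ) (z : Euc n) (hz : 0 < ‖z‖ ^ 2 + s) (k : WithTop ℕ∞) :
    ContDiffAt ℝ k (Pw n q s) z := by
  unfold Pw
  exact ((contDiff_norm_sq ℝ).contDiffAt.add contDiffAt_const).rpow_const_of_ne hz.ne'

lemma Pw_hasFDerivAt (n : ℕ) (q s : ℝ) (z : Euc n) (hz : 0 < ‖z‖ ^ 2 + s) :
    HasFDerivAt (Pw n q s) ((2 * q * Pw n (q - 1) s z) • innerSL ℝ z) z := by
  have h1 : HasFDerivAt (fun z : Euc n => ‖z‖ ^ 2 + s) (2 • innerSL ℝ z) z :=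
    (hasStrictFDerivAt_norm_sq z).hasFDerivAt.add_const s
  have h2 := h1.rpow_const (p := q) (Or.inl hz.ne')
  have h3 : (q * (‖z‖ ^ 2 + s) ^ (q - 1)) • (2 • innerSL ℝ z)
      = (2 * q * Pw n (q - 1) s z) • innerSL ℝ z := by
    ext w
    simp [Pw]
    ring
  rw [h3] at h2
  exact h2

lemma Pw_fderiv_fderiv (n : ℕ) (q s : ℝ) (z : Euc n) (hz : 0 < ‖z‖ ^ 2 + s) (a b : Euc n) :
    fderiv ℝ (fderiv ℝ (Pw n q s)) z a b =
      2 * q * Pw n (q - 1) s z * inner ℝ a b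
      + 2 * q * (2 * (q - 1)) * Pw n (q - 2) s z * inner ℝ z a * inner ℝ z b := by
  have hev : fderiv ℝ (Pw n q s) =ᶠ[𝓝 z] fun z => (2 * q * Pw n (q - 1) s z) • innerSL ℝ z := by
    have : ∀ᶠ y : Euc n in 𝓝 z, 0 < ‖y‖ ^ 2 + s :=
      (show ContinuousAt (fun y : Euc n => ‖y‖ ^ 2 + s) z by fun_prop).eventually (lt_mem_nhds hz)
    filter_upwards [this] with y hy
    exact (Pw_hasFDerivAt n q s y hy).fderiv
  rw [hev.fderiv_eq]
  have h1 := (Pw_hasFDerivAt n (q - 1) s z hz).const_mul (2 * q)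
  have h2 : HasFDerivAt (fun z : Euc n => innerSL ℝ z) (innerSL ℝ : Euc n →L[ℝ] _) z :=
    (innerSL ℝ : Euc n →L[ℝ] _).hasFDerivAt
  have h3 := h1.fun_smul h2
  rw [h3.fderiv]
  simp
  erw [innerSL_apply_apply]
  rw [show q - 1 - 1 = q - 2 by ring]
  ring

lemma sum_inner_ebasis_sq (n : ℕ) (z : Euc n) :
    ∑ i, inner ℝ z (ebasis n i) * inner ℝ z (ebasis n i) = ‖z‖ ^ 2 := by
  simp [ebasis, EuclideanSpace.norm_sq_eq, EuclideanSpace.inner_single_right]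
  exact Finset.sum_congr rfl fun i _ => by ring

lemma lapl_Pw (n : ℕ) (s : ℝ) (z : Euc n) (hz : 0 < ‖z‖ ^ 2 + s) :
    lapl n (Pw n ((2 - n) / 2) s) z
      = - ((n : ℝ) * (n - 2)) * (s * Pw n (-((n : ℝ) + 2) / 2) s z) := by
  rw [lapl_eq']
  simp only [Pw_fderiv_fderiv n _ s z hz]
  rw [Finset.sum_add_distrib]
  simp only [mul_assoc]
  simp only [← Finset.mul_sum]
  rw [sum_inner_ebasis_sq]
  have h1 : ∑ i : Fin n, inner ℝ (ebasis n i) (ebasis n i) = (n : ℝ) := by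
    simp [ebasis]
  rw [h1]
  have h2 : Pw n ((2 - (n:ℝ)) / 2 - 1) s z = Pw n (-((n : ℝ) + 2) / 2) s z * (‖z‖ ^ 2 + s) := by
    unfold Pw
    rw [← Real.rpow_add_one hz.ne']
    congr 1; ring
  have h3 : (2 - (n:ℝ)) / 2 - 2 = -((n : ℝ) + 2) / 2 := by ring
  rw [h2, h3]
  ring

lemma Pw_integrable (n : ℕ) : Integrable (Pw n (-((n : ℝ) + 2) / 2) 1) := by
  have := integrable_rpow_neg_one_add_norm_sq (E := Euc n) (μ := volume) (r := n + 2) (by simp)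
  refine this.congr (ae_of_all _ fun z => ?_)
  simp [Pw, add_comm]

lemma Pw_norm_integrable (n : ℕ) :
    Integrable (fun z : Euc n => ‖z‖ * Pw n (-((n : ℝ) + 2) / 2) 1 z) := by
  have := integrable_rpow_neg_one_add_norm_sq (E := Euc n) (μ := volume) (r := n + 1) (by simp)
  refine this.mono' ?_ (ae_of_all _ fun z => ?_)
  · apply Continuous.aestronglyMeasurable
    unfold Pw
    refine continuous_norm.mul (Continuous.rpow_const (by fun_prop) fun z => Or.inl (by positivity))
  · have h0 : 0 < 1 + ‖z‖ ^ 2 := by positivity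
    rw [Real.norm_of_nonneg (by unfold Pw; positivity)]
    unfold Pw
    have h1 : ‖z‖ ≤ (1 + ‖z‖ ^ 2) ^ (1 / 2 : ℝ) := by
      rw [← Real.sqrt_eq_rpow]
      apply Real.le_sqrt_of_sq_le; linarith
    calc _ ≤ (1 + ‖z‖ ^ 2) ^ (1 / 2 : ℝ) * (‖z‖ ^ 2 + 1) ^ (-((n : ℝ) + 2) / 2) := by gcongr
      _ = _ := by
        rw [add_comm (‖z‖ ^ 2) 1, ← Real.rpow_add h0]
        congr 1; ring

lemma Pw_pos (n : ℕ) (q s : ℝ) (z : Euc n) (hz : 0 < ‖z‖ ^ 2 + s) : 0 < Pw n q s z :=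
  Real.rpow_pos_of_pos hz _

lemma Pw_continuous (n : ℕ) (q s : ℝ) (hs : 0 < s) : Continuous (Pw n q s) := by
  unfold Pw
  exact Continuous.rpow_const (by fun_prop) fun z => Or.inl (by positivity)

lemma Pw_integral_pos (n : ℕ) : 0 < ∫ z, Pw n (-((n : ℝ) + 2) / 2) 1 z := by
  have hp : ∀ z, 0 < Pw n (-((n : ℝ) + 2) / 2) 1 z := fun z => Pw_pos n _ _ z (by positivity)
  rw [integral_pos_iff_support_of_nonneg (fun z => (hp z).le) (Pw_integrable n)]
  rw [show Function.support (Pw n (-((n : ℝ) + 2) / 2) 1) = Set.univ from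
    Set.eq_univ_of_forall fun z => (hp z).ne']
  exact isOpen_univ.measure_pos volume Set.univ_nonempty

lemma approx_identity_rescale (n : ℕ) (f : Euc n → ℝ) (R : ℝ)
    (hsupp : ∀ y, R < ‖y‖ → f y = 0) (ε : ℝ) (hε : 0 < ε) (x : Euc n) :
    ∫ y in Metric.closedBall (0 : Euc n) R, f y * (ε ^ 2 * Pw n (-((n : ℝ) + 2) / 2) (ε ^ 2) (x - y))
      = ∫ z, f (x - ε • z) * Pw n (-((n : ℝ) + 2) / 2) 1 z := by
  rw [setIntegral_eq_integral_of_forall_compl_eq_zero (fun y hy => by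
    rw [hsupp y (by simpa using hy), zero_mul])]
  rw [← integral_sub_left_eq_self _ volume x]
  simp only [sub_sub_cancel]
  have h1 := Measure.integral_comp_smul_of_nonneg (volume : Measure (Euc n))
    (fun z => f (x - z) * (ε ^ 2 * Pw n (-((n : ℝ) + 2) / 2) (ε ^ 2) z)) ε (hR := hε.le)
  have h2 : ∀ z : Euc n, f (x - ε • z) * (ε ^ 2 * Pw n (-((n : ℝ) + 2) / 2) (ε ^ 2) (ε • z))
      = (ε ^ n)⁻¹ * (f (x - ε • z) * Pw n (-((n : ℝ) + 2) / 2) 1 z) := by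
    intro z
    have : ε ^ 2 * Pw n (-((n : ℝ) + 2) / 2) (ε ^ 2) (ε • z)
        = (ε ^ n)⁻¹ * Pw n (-((n : ℝ) + 2) / 2) 1 z := by
      unfold Pw
      rw [norm_smul, mul_pow, Real.norm_eq_abs, sq_abs,
        show ε ^ 2 * ‖z‖ ^ 2 + ε ^ 2 = ε ^ 2 * (‖z‖ ^ 2 + 1) by ring,
        Real.mul_rpow (by positivity) (by positivity), ← mul_assoc]
      congr 1
      rw [← Real.rpow_natCast ε n, ← Real.rpow_neg hε.le, ← Real.rpow_natCast ε 2,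
        ← Real.rpow_mul hε.le, ← Real.rpow_add hε]
      congr 1
      push_cast; ring
    rw [this]; ring
  simp only [h2] at h1
  rw [integral_const_mul] at h1
  simp only [finrank_euclideanSpace, Fintype.card_fin, smul_eq_mul] at h1
  have : (ε ^ n)⁻¹ ≠ 0 := by positivity
  exact (mul_left_cancel₀ this h1).symm

lemma approx_identity (n : ℕ) (f : Euc n → ℝ) (R : ℝ) (hR : 0 < R) (hf : Continuous f)
    (hsupp : ∀ y, R < ‖y‖ → f y = 0) (L : ℝ) (hL : ∀ x y, |f x - f y| ≤ L * ‖x - y‖) :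
    ∃ C : ℝ, 0 < C ∧ ∀ ε : ℝ, 0 < ε → ε ≤ 1 → ∀ x : Euc n,
      |(∫ z, Pw n (-((n : ℝ) + 2) / 2) 1 z) * f x -
        ∫ y in Metric.closedBall (0 : Euc n) R,
          f y * (ε ^ 2 * Pw n (-((n : ℝ) + 2) / 2) (ε ^ 2) (x - y))|
      ≤ C * ε * Pw n (-((n : ℝ) + 2) / 2) 1 x := by
  set p : ℝ := -((n : ℝ) + 2) / 2 with hp
  have hp0 : p ≤ 0 := by rw [hp]; have : (0:ℝ) ≤ n := n.cast_nonneg; linarith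
  obtain ⟨M, hM⟩ := (isCompact_closedBall (0 : Euc n) R).exists_bound_of_continuousOn hf.continuousOn
  have hM0 : 0 ≤ M := (norm_nonneg _).trans (hM 0 (by simp [hR.le]))
  set J1 := ∫ z : Euc n, ‖z‖ * Pw n p 1 z
  set m := (1 + (2 * R + 1) ^ 2) ^ p
  have hm : 0 < m := by positivity
  set V := volume.real (Metric.closedBall (0 : Euc n) R)
  have hV : 0 ≤ V := measureReal_nonneg
  have hPc : Continuous (Pw n p 1) := Pw_continuous n p 1 one_pos
  have hJ1 : 0 ≤ J1 := integral_nonneg fun z => mul_nonneg (norm_nonneg _) (Pw_pos n p 1 z (by positivity)).le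
  obtain ⟨C, hC0, hC1, hC2⟩ : ∃ C : ℝ, 0 < C ∧ |L| * J1 / m ≤ C ∧ M * (8:ℝ) ^ (-p) * V ≤ C := by
    have h1 : 0 ≤ |L| * J1 / m := by positivity
    have h2 : 0 ≤ M * (8:ℝ) ^ (-p) * V := by positivity
    exact ⟨|L| * J1 / m + M * (8:ℝ) ^ (-p) * V + 1, by linarith, by linarith, by linarith⟩
  refine ⟨C, hC0, fun ε hε hε1 x => ?_⟩
  have hPx : 0 < Pw n p 1 x := Pw_pos n p 1 x (by positivity)
  rcases le_or_gt ‖x‖ (2 * R + 1) with hx | hx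
  · rw [approx_identity_rescale n f R hsupp ε hε x, mul_comm, ← integral_const_mul]
    have hi1 : Integrable (fun z => f x * Pw n p 1 z) := (Pw_integrable n).const_mul _
    obtain ⟨M', hM'⟩ : ∃ M', ∀ y, ‖f y‖ ≤ M' := ⟨M, fun y => by
      rcases le_or_gt ‖y‖ R with h | h
      · exact hM y (by simpa using h)
      · rw [hsupp y h]; simpa using hM0⟩
    have hi2 : Integrable (fun z => f (x - ε • z) * Pw n p 1 z) :=
      (Pw_integrable n).bdd_mul (c := M') (by
        apply Continuous.aestronglyMeasurable; fun_prop) (ae_of_all _ fun z => hM' _)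
    rw [← integral_sub hi1 hi2]
    have hb : ‖∫ z, (f x * Pw n p 1 z - f (x - ε • z) * Pw n p 1 z)‖
        ≤ ∫ z : Euc n, (|L| * ε) * (‖z‖ * Pw n p 1 z) := by
      refine norm_integral_le_of_norm_le ((Pw_norm_integrable n).const_mul _) (ae_of_all _ fun z => ?_)
      have hPz : 0 < Pw n p 1 z := Pw_pos n p 1 z (by positivity)
      rw [← sub_mul, norm_mul, Real.norm_of_nonneg hPz.le, ← mul_assoc]
      gcongr
      calc ‖f x - f (x - ε • z)‖ ≤ L * ‖x - (x - ε • z)‖ := hL _ _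
        _ ≤ |L| * ‖x - (x - ε • z)‖ := by gcongr; exact le_abs_self L
        _ = _ := by simp [norm_smul, abs_of_pos hε]; ring
    rw [integral_const_mul] at hb
    rw [← Real.norm_eq_abs]
    refine hb.trans ?_
    have hmP : m ≤ Pw n p 1 x := by
      unfold Pw
      apply Real.rpow_le_rpow_of_nonpos (by positivity) _ hp0
      rw [add_comm]; gcongr
    calc |L| * ε * J1 = (|L| * J1 / m) * ε * m := by field_simp
      _ ≤ C * ε * Pw n p 1 x := by
        gcongr
  · rw [hsupp x (by linarith), mul_zero, zero_sub, abs_neg, ← Real.norm_eq_abs]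
    have hb : ∀ y ∈ Metric.closedBall (0 : Euc n) R,
        ‖f y * (ε ^ 2 * Pw n p (ε ^ 2) (x - y))‖ ≤ M * (ε * ((8:ℝ) ^ (-p) * Pw n p 1 x)) := by
      intro y hy
      have hy' : ‖y‖ ≤ R := by simpa using hy
      have hxy : ‖x‖ / 2 ≤ ‖x - y‖ := by
        have := norm_sub_norm_le x y
        linarith
      have h8 : (1 + ‖x‖ ^ 2) / 8 ≤ ‖x - y‖ ^ 2 + ε ^ 2 := by
        nlinarith [norm_nonneg x, sq_nonneg ε]
      have hP : Pw n p (ε ^ 2) (x - y) ≤ (8:ℝ) ^ (-p) * Pw n p 1 x := by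
        unfold Pw
        calc _ ≤ ((1 + ‖x‖ ^ 2) / 8) ^ p := Real.rpow_le_rpow_of_nonpos (by positivity) h8 hp0
          _ = _ := by
            rw [Real.div_rpow (by positivity) (by positivity), Real.rpow_neg (by positivity),
              add_comm, div_eq_inv_mul]
      have hP0 : 0 ≤ Pw n p (ε ^ 2) (x - y) := (Pw_pos _ _ _ _ (by positivity)).le
      rw [norm_mul, norm_mul, Real.norm_of_nonneg hP0, Real.norm_of_nonneg (sq_nonneg ε)]
      have hε2 : ε ^ 2 ≤ ε := by nlinarith
      gcongr
      exact hM y hy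
    refine (norm_setIntegral_le_of_norm_le_const (isCompact_closedBall _ _).measure_lt_top hb).trans ?_
    calc _ = (M * (8:ℝ) ^ (-p) * V) * ε * Pw n p 1 x := by ring
      _ ≤ _ := by
        gcongr

lemma nat_le_infty (k : ℕ) : (k : WithTop ℕ∞) ≤ ((⊤ : ℕ∞) : WithTop ℕ∞) := by
  exact_mod_cast le_top

lemma two_le_infty : (1 + 1 : WithTop ℕ∞) ≤ ((⊤ : ℕ∞) : WithTop ℕ∞) := by
  have := nat_le_infty 2
  norm_num at this ⊢
  exact this

lemma conv_smul_apply {E F : Type*} [NormedAddCommGroup E] [NormedSpace ℝ E]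
    [NormedAddCommGroup F] [NormedSpace ℝ F] [CompleteSpace F]
    [MeasurableSpace E] [BorelSpace E] (μ : Measure E) [IsFiniteMeasureOnCompacts μ]
    {f : E → ℝ} (hf : Continuous f) {K U : Set E} (hK : IsCompact K)
    {T : E → E →L[ℝ] F} (hT : ContinuousOn T U) (x : E) (hx : ∀ y ∈ K, x - y ∈ U) (a : E) :
    (∫ y in K, f y • T (x - y) ∂μ) a = ∫ y in K, f y • (T (x - y) a) ∂μ ∧
    IntegrableOn (fun y => f y • (T (x - y) a)) K μ := by
  have hc : ContinuousOn (fun y => f y • T (x - y)) K :=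
    hf.continuousOn.smul (hT.comp (by fun_prop) hx)
  have hint : IntegrableOn (fun y => f y • T (x - y)) K μ :=
    hc.integrableOn_compact hK
  constructor
  · rw [ContinuousLinearMap.integral_apply hint]
    rfl
  · exact hint.apply_continuousLinearMap a

lemma conv_hess_apply {E : Type*} [NormedAddCommGroup E] [NormedSpace ℝ E] [FiniteDimensional ℝ E]
    [MeasurableSpace E] [BorelSpace E] (μ : Measure E) [IsFiniteMeasureOnCompacts μ]
    {f : E → ℝ} (hf : Continuous f) {K U : Set E} (hK : IsCompact K) (hU : IsOpen U) {g : E → ℝ}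
    (hg : ContDiffOn ℝ (⊤ : ℕ∞) g U) (x : E) (hx : ∀ y ∈ K, x - y ∈ U) (a b : E) :
    (∫ y in K, f y • fderiv ℝ (fderiv ℝ g) (x - y) ∂μ) a b
      = ∫ y in K, f y * fderiv ℝ (fderiv ℝ g) (x - y) a b ∂μ ∧
    IntegrableOn (fun y => f y * fderiv ℝ (fderiv ℝ g) (x - y) a b) K μ := by
  have h1 : ContDiffOn ℝ 1 (fderiv ℝ g) U := hg.fderiv_of_isOpen hU two_le_infty
  have h2 : ContinuousOn (fderiv ℝ (fderiv ℝ g)) U := h1.continuousOn_fderiv_of_isOpen hU (by simp)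
  have h3 := conv_smul_apply μ hf hK h2 x hx a
  have h4 : ContinuousOn (fun z => fderiv ℝ (fderiv ℝ g) z a) U := h2.clm_apply continuousOn_const
  have h5 := conv_smul_apply μ hf hK h4 x hx b
  refine ⟨?_, h5.2⟩
  rw [h3.1]
  exact h5.1

lemma conv_contDiff {n : ℕ} {f : Euc n → ℝ} (hf : Continuous f) (R : ℝ) (k : ℕ) :
    ∀ (F : Type) [NormedAddCommGroup F] [NormedSpace ℝ F] [CompleteSpace F] (g : Euc n → F),
      ContDiff ℝ (⊤ : ℕ∞) g →
      ContDiff ℝ k (fun x => ∫ y in Metric.closedBall (0 : Euc n) R, f y • g (x - y)) := by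
  induction k with
  | zero =>
    intro F _ _ _ g hg
    refine contDiff_zero.2 ?_
    refine continuous_iff_continuousAt.2 fun x => ?_
    exact (conv_hasFDerivAt hf R isOpen_univ
      (hg.of_le (by exact_mod_cast le_top)).contDiffOn x (by simp)).continuousAt
  | succ k ih =>
    intro F _ _ _ g hg
    have hd : ∀ x, HasFDerivAt _ _ x := fun x => conv_hasFDerivAt hf R isOpen_univ
      (hg.of_le (by exact_mod_cast le_top)).contDiffOn x (by simp)
    push_cast
    refine contDiff_succ_iff_fderiv.2 ⟨fun x => (hd x).differentiableAt, by simp, ?_⟩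
    have : fderiv ℝ (fun x => ∫ y in Metric.closedBall (0 : Euc n) R, f y • g (x - y))
        = fun x => ∫ y in Metric.closedBall (0 : Euc n) R, f y • fderiv ℝ g (x - y) := by
      funext x; exact (hd x).fderiv
    rw [this]
    exact ih _ _ (hg.fderiv_right (by exact_mod_cast le_top))

/-- second derivative of a convolution -/
lemma conv_fderiv2 {n : ℕ} {f : Euc n → ℝ} (hf : Continuous f) (R : ℝ) {U W : Set (Euc n)}
    (hU : IsOpen U) {g : Euc n → ℝ} (hg : ContDiffOn ℝ (⊤ : ℕ∞) g U) (hW : IsOpen W)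
    (hWU : ∀ x ∈ W, ∀ y ∈ Metric.closedBall (0 : Euc n) R, x - y ∈ U) (x : Euc n) (hx : x ∈ W) :
    fderiv ℝ (fderiv ℝ (fun x => ∫ y in Metric.closedBall (0 : Euc n) R, f y • g (x - y))) x
      = ∫ y in Metric.closedBall (0 : Euc n) R, f y • fderiv ℝ (fderiv ℝ g) (x - y) := by
  have hev : fderiv ℝ (fun x => ∫ y in Metric.closedBall (0 : Euc n) R, f y • g (x - y))
      =ᶠ[𝓝 x] fun x => ∫ y in Metric.closedBall (0 : Euc n) R, f y • fderiv ℝ g (x - y) := by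
    filter_upwards [hW.mem_nhds hx] with z hz
    exact (conv_hasFDerivAt hf R hU (hg.of_le (by exact_mod_cast le_top)) z (hWU z hz)).fderiv
  rw [hev.fderiv_eq]
  exact (conv_hasFDerivAt hf R hU
    (hg.fderiv_of_isOpen hU (m := 1) two_le_infty) x (hWU x hx)).fderiv

lemma Pw_contDiff (n : ℕ) (q s : ℝ) (hs : 0 < s) (k : WithTop ℕ∞) : ContDiff ℝ k (Pw n q s) :=
  contDiff_iff_contDiffAt.2 fun z => Pw_contDiffAt n q s z (by positivity) k

lemma conv_lapl (n : ℕ) {f : Euc n → ℝ} (hf : Continuous f) (R s : ℝ) (hs : 0 < s) (x : Euc n) :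
    lapl n (fun x => ∫ y in Metric.closedBall (0 : Euc n) R, f y • Pw n ((2 - n) / 2) s (x - y)) x
      = - ((n : ℝ) * (n - 2)) * ∫ y in Metric.closedBall (0 : Euc n) R,
          f y * (s * Pw n (-((n : ℝ) + 2) / 2) s (x - y)) := by
  set g := Pw n ((2 - n) / 2) s
  have hg : ContDiff ℝ (⊤ : ℕ∞) g := Pw_contDiff n _ s hs _
  rw [lapl_eq', conv_fderiv2 hf R isOpen_univ hg.contDiffOn isOpen_univ (by simp) x (by simp)]
  have H := fun i => conv_hess_apply (volume : Measure (Euc n)) hf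
    (isCompact_closedBall (0 : Euc n) R) isOpen_univ hg.contDiffOn x (by simp)
    (ebasis n i) (ebasis n i)
  rw [Finset.sum_congr rfl fun i _ => (H i).1, ← integral_finsetSum _ fun i _ => (H i).2,
    ← integral_const_mul]
  congr 1; funext y
  rw [← Finset.mul_sum, ← lapl_eq', lapl_Pw n s (x - y) (by positivity)]
  ring

lemma Pw_tendsto_zero (n : ℕ) (q s : ℝ) (hq : q < 0) :
    Tendsto (Pw n q s) (cocompact (Euc n)) (𝓝 0) := by
  have h1 : Tendsto (fun z : Euc n => ‖z‖ ^ 2 + s) (cocompact (Euc n)) atTop :=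
    tendsto_atTop_add_const_right _ _
      ((tendsto_pow_atTop (by norm_num)).comp tendsto_norm_cocompact_atTop)
  have h2 := (tendsto_rpow_neg_atTop (y := -q) (by linarith)).comp h1
  unfold Pw
  simpa [Function.comp_def] using h2

lemma Pw_le (n : ℕ) (q s : ℝ) (hq : q < 0) (hs : 0 < s) (z : Euc n) : Pw n q s z ≤ s ^ q :=
  Real.rpow_le_rpow_of_nonpos hs (by nlinarith [norm_nonneg z]) hq.le

lemma conv_tendsto_zero (n : ℕ) {f : Euc n → ℝ} (hf : Continuous f) (R q s : ℝ) (hs : 0 < s)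
    (hq : q < 0) :
    Tendsto (fun x => ∫ y in Metric.closedBall (0 : Euc n) R, f y • Pw n q s (x - y))
      (cocompact (Euc n)) (𝓝 0) := by
  have hcg : (cocompact (Euc n)).IsCountablyGenerated := by
    rw [← Metric.cobounded_eq_cocompact, ← comap_norm_atTop]
    infer_instance
  have hPc := Pw_continuous n q s hs
  have := tendsto_integral_filter_of_dominated_convergence (l := cocompact (Euc n))
    (μ := volume.restrict (Metric.closedBall (0 : Euc n) R))
    (F := fun x y => f y • Pw n q s (x - y)) (f := fun _ => (0:ℝ)) (fun y => ‖f y‖ * s ^ q)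
    (Eventually.of_forall fun x => by
      apply Continuous.aestronglyMeasurable; fun_prop)
    (Eventually.of_forall fun x => ae_of_all _ fun y => by
      rw [norm_smul, Real.norm_of_nonneg (Pw_pos n q s (x - y) (by positivity)).le]
      gcongr
      exact Pw_le n q s hq hs _)
    ((hf.norm.mul continuous_const).continuousOn.integrableOn_compact (isCompact_closedBall _ _))
    (ae_of_all _ fun y => by
      have h1 : Tendsto (fun x : Euc n => x - y) (cocompact _) (cocompact _) :=
        (Homeomorph.subRight y).isClosedEmbedding.tendsto_cocompact
      have := ((Pw_tendsto_zero n q s hq).comp h1).const_mul (f y)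
      simpa [Function.comp_def] using this)
  simpa using this

lemma repr_eps (n : ℕ) (hn : 3 ≤ n) (v : Euc n → ℝ) (hv : ContDiff ℝ 3 v) (R : ℝ) (hR : 0 < R)
    (hsupp : ∀ y, R < ‖y‖ → lapl n v y = 0) (hlim : Tendsto v (cocompact (Euc n)) (𝓝 0)) :
    Continuous (lapl n v) ∧ ∃ a C : ℝ, 0 < C ∧ ∀ ε : ℝ, 0 < ε → ε ≤ 1 → ∀ x,
      |v x - a * ∫ y in Metric.closedBall (0 : Euc n) R,
        lapl n v y • Pw n ((2 - n) / 2) (ε ^ 2) (x - y)| ≤ C * ε := by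
  have hn' : (3:ℝ) ≤ n := by exact_mod_cast hn
  set f := lapl n v with hfdef
  have hfc1 : ContDiff ℝ 1 f := by
    have : f = fun x => ∑ i, fderiv ℝ (fderiv ℝ v) x (ebasis n i) (ebasis n i) := by
      funext x; exact lapl_eq' n v x
    rw [this]
    have h2 : ContDiff ℝ 1 (fderiv ℝ (fderiv ℝ v)) :=
      (hv.fderiv_right (m := 2) (by norm_num)).fderiv_right (by norm_num)
    exact ContDiff.sum fun i _ => (h2.clm_apply contDiff_const).clm_apply contDiff_const
  have hf : Continuous f := hfc1.continuous
  refine ⟨hf, ?_⟩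
  have hcs : HasCompactSupport f :=
    HasCompactSupport.intro (isCompact_closedBall (0 : Euc n) R) fun y hy => hsupp y (by simpa using hy)
  obtain ⟨L, hL⟩ := hfc1.lipschitzWith_of_hasCompactSupport hcs (by simp)
  obtain ⟨C, hC, hap⟩ := approx_identity n f R hR hf hsupp L
    (fun x y => by simpa [dist_eq_norm] using hL.dist_le_mul x y)
  have hJ := Pw_integral_pos n
  set J := ∫ z, Pw n (-((n : ℝ) + 2) / 2) 1 z
  obtain ⟨N, hN⟩ : ∃ N : ℝ, N = (n : ℝ) * (n - 2) := ⟨_, rfl⟩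
  have hN0 : 0 < N := by rw [hN]; nlinarith
  have hq : (2 - (n:ℝ)) / 2 < 0 := by linarith
  refine ⟨-1 / (N * J), 2 * C / (N * J), by positivity, fun ε hε hε1 => ?_⟩
  have hε2 : 0 < ε ^ 2 := by positivity
  have hw2 : ContDiff ℝ 2 (fun x : Euc n => ∫ y in Metric.closedBall (0 : Euc n) R,
      f y • Pw n ((2 - n) / 2) (ε ^ 2) (x - y)) := by
    exact conv_contDiff hf R 2 ℝ (Pw n ((2 - n) / 2) (ε ^ 2)) (Pw_contDiff n _ _ hε2 _)
  have hwl := conv_lapl n hf R (ε ^ 2) hε2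
  have hwt := conv_tendsto_zero n hf R ((2 - n) / 2) (ε ^ 2) hε2 hq
  generalize hwdef : (fun x : Euc n => ∫ y in Metric.closedBall (0 : Euc n) R,
      f y • Pw n ((2 - n) / 2) (ε ^ 2) (x - y)) = w at hw2 hwl hwt
  have hb1 : ∀ x, Pw n ((2 - n) / 2) 1 x ≤ 1 := fun x => by
    simpa using Pw_le n ((2 - n) / 2) 1 hq one_pos x
  have hbl := fun z : Euc n => lapl_Pw n 1 z (by positivity)
  have hbc := fun k => Pw_contDiff n ((2 - n) / 2) 1 one_pos k
  have hbt := Pw_tendsto_zero n _ 1 hq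
  generalize Pw n ((2 - n) / 2) 1 = b at hb1 hbl hbc hbt
  have hb2 : ContDiff ℝ 2 b := hbc 2
  have hv2 : ContDiff ℝ 2 v := hv.of_le (by norm_num)
  have key : ∀ σ : ℝ, |σ| = 1 → ∀ x,
      0 ≤ (2 * C / (N * J) * ε) * b x + (σ * v x + (σ * (1 / (N * J))) * w x) := by
    intro σ hσ x
    have A1 : ContDiff ℝ 2 fun x => (2 * C / (N * J) * ε) * b x := contDiff_const.mul hb2
    have A2 : ContDiff ℝ 2 fun x => σ * v x := contDiff_const.mul hv2
    have A3 : ContDiff ℝ 2 fun x => (σ * (1 / (N * J))) * w x := contDiff_const.mul hw2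
    refine strictMP n Set.univ isClosed_univ
      (fun x => (2 * C / (N * J) * ε) * b x + (σ * v x + (σ * (1 / (N * J))) * w x))
      (A1.add (A2.add A3)).continuous.continuousOn ?_ ?_ x trivial
    · have := (hbt.const_mul (2 * C / (N * J) * ε)).add
        ((hlim.const_mul σ).add (hwt.const_mul (σ * (1 / (N * J)))))
      simpa using this
    · intro z _
      refine Or.inr ⟨univ_mem, (A1.add (A2.add A3)).contDiffAt, ?_⟩
      rw [lapl_add n A1.contDiffAt (A2.add A3).contDiffAt, lapl_add n A2.contDiffAt A3.contDiffAt,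
        lapl_const_mul n _ hb2.contDiffAt, lapl_const_mul n _ hv2.contDiffAt,
        lapl_const_mul n _ hw2.contDiffAt, hwl z, hbl z, ← hN, ← hfdef]
      have hz := hap ε hε hε1 z
      have hPz : 0 < Pw n (-((n : ℝ) + 2) / 2) 1 z := Pw_pos _ _ _ _ (by positivity)
      generalize Pw n (-((n : ℝ) + 2) / 2) 1 z = P at hz hPz ⊢
      generalize f z = fz at hz ⊢
      generalize J = J at hJ hz ⊢
      generalize (∫ y in Metric.closedBall (0 : Euc n) R,
          f y * (ε ^ 2 * Pw n (-((n : ℝ) + 2) / 2) (ε ^ 2) (z - y))) = I at hz ⊢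
      have e : 2 * C / (N * J) * ε * (-N * (1 * P)) +
          (σ * fz + σ * (1 / (N * J)) * (-N * I))
          = (1 / J) * (σ * (J * fz - I) - 2 * (C * ε * P)) := by
        field_simp
        ring
      rw [e]
      have h1 : σ * (J * fz - I) ≤ |J * fz - I| := by
        calc _ ≤ |σ * (J * fz - I)| := le_abs_self _
          _ = _ := by rw [abs_mul, hσ, one_mul]
      have h2 : 0 < C * ε * P := by positivity
      have h3 : 0 < 1 / J := by positivity
      apply mul_neg_of_pos_of_neg h3
      linarith
  intro x
  have k1 := key 1 (by simp) x
  have k2 := key (-1) (by simp) x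
  have hb' : (2 * C / (N * J) * ε) * b x ≤ 2 * C / (N * J) * ε :=
    mul_le_of_le_one_right (by positivity) (hb1 x)
  have e2 : -1 / (N * J) = - (1 / (N * J)) := by ring
  rw [abs_le, e2]
  have hwx := congrFun hwdef x
  try rw [hwx]
  change _ ≤ v x - -(1 / (N * J)) * w x ∧ v x - -(1 / (N * J)) * w x ≤ _
  constructor <;> linarith

lemma repr_exact (n : ℕ) (hn : 3 ≤ n) (v : Euc n → ℝ) (hv : ContDiff ℝ 3 v) (R : ℝ) (hR : 0 < R)
    (hsupp : ∀ y, R < ‖y‖ → lapl n v y = 0) (hlim : Tendsto v (cocompact (Euc n)) (𝓝 0)) :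
    ∃ f : Euc n → ℝ, Continuous f ∧ ∀ x, R < ‖x‖ →
      v x = ∫ y in Metric.closedBall (0 : Euc n) R, f y • Pw n ((2 - n) / 2) 0 (x - y) := by
  have hn' : (3:ℝ) ≤ n := by exact_mod_cast hn
  have hq : (2 - (n:ℝ)) / 2 < 0 := by linarith
  obtain ⟨hf, a, C, hC, h⟩ := repr_eps n hn v hv R hR hsupp hlim
  set f := lapl n v
  refine ⟨fun y => a * f y, continuous_const.mul hf, fun x hx => ?_⟩
  have hBm : MeasurableSet (Metric.closedBall (0 : Euc n) R) := Metric.isClosed_closedBall.measurableSet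
  have hpos : ∀ y ∈ Metric.closedBall (0 : Euc n) R, ‖x‖ - R ≤ ‖x - y‖ := by
    intro y hy
    have hy' : ‖y‖ ≤ R := by simpa using hy
    linarith [norm_sub_norm_le x y]
  have hd : 0 < ‖x‖ - R := by linarith
  have ht : Tendsto (fun ε : ℝ => ∫ y in Metric.closedBall (0 : Euc n) R,
        f y • Pw n ((2 - n) / 2) (ε ^ 2) (x - y)) (𝓝[>] 0)
      (𝓝 (∫ y in Metric.closedBall (0 : Euc n) R, f y • Pw n ((2 - n) / 2) 0 (x - y))) := by
    apply tendsto_integral_filter_of_dominated_convergence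
      (fun y => ‖f y‖ * ((‖x‖ - R) ^ 2) ^ ((2 - (n:ℝ)) / 2))
    · filter_upwards [self_mem_nhdsWithin] with ε hε
      have hε : 0 < ε := hε
      have := Pw_continuous n ((2 - n) / 2) (ε ^ 2) (by positivity)
      apply Continuous.aestronglyMeasurable; fun_prop
    · filter_upwards [self_mem_nhdsWithin] with ε hε
      have hε : 0 < ε := hε
      refine (ae_restrict_iff' hBm).2 (ae_of_all _ fun y hy => ?_)
      rw [norm_smul, Real.norm_of_nonneg (Pw_pos n _ _ (x - y) (by positivity)).le]
      gcongr
      refine Real.rpow_le_rpow_of_nonpos (by positivity) ?_ hq.le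
      have := hpos y hy
      nlinarith
    · exact (hf.norm.mul continuous_const).continuousOn.integrableOn_compact (isCompact_closedBall _ _)
    · refine (ae_restrict_iff' hBm).2 (ae_of_all _ fun y hy => ?_)
      apply Tendsto.const_smul
      have h1 : Tendsto (fun ε : ℝ => ‖x - y‖ ^ 2 + ε ^ 2) (𝓝[>] 0) (𝓝 (‖x - y‖ ^ 2 + 0)) := by
        have : ContinuousAt (fun ε : ℝ => ‖x - y‖ ^ 2 + ε ^ 2) 0 := by fun_prop
        simpa using this.tendsto.mono_left nhdsWithin_le_nhds
      refine h1.rpow_const (Or.inl ?_)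
      have := hpos y hy
      have : 0 < ‖x - y‖ := by linarith
      positivity
  have ht2 : Tendsto (fun ε : ℝ => a * ∫ y in Metric.closedBall (0 : Euc n) R,
        f y • Pw n ((2 - n) / 2) (ε ^ 2) (x - y)) (𝓝[>] 0) (𝓝 (v x)) := by
    rw [tendsto_iff_dist_tendsto_zero]
    refine squeeze_zero' (Eventually.of_forall fun _ => dist_nonneg) (g := fun ε => C * ε) ?_ ?_
    · filter_upwards [Ioc_mem_nhdsGT (show (0:ℝ) < 1 by norm_num)] with ε hε
      rw [dist_comm, Real.dist_eq]
      exact h ε hε.1 hε.2 x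
    · have : ContinuousAt (fun ε : ℝ => C * ε) 0 := by fun_prop
      simpa using this.tendsto.mono_left nhdsWithin_le_nhds
  rw [tendsto_nhds_unique ht2 (ht.const_mul a), ← integral_const_mul]
  simp [mul_assoc]

lemma repr_u (n : ℕ) (hn : 3 ≤ n) (Ω : Set (Euc n)) (hb : Bornology.IsBounded Ω)
    (u : Euc n → ℝ) (hu : HarmExtSol n Ω u) :
    ∃ R : ℝ, 0 < R ∧ ∃ f : Euc n → ℝ, Continuous f ∧ ∀ x, R < ‖x‖ →
      u x = ∫ y in Metric.closedBall (0 : Euc n) R, f y • Pw n ((2 - n) / 2) 0 (x - y) := by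
  obtain ⟨⟨U, hUo, hUs, hUc⟩, hharm, -, hlim⟩ := hu
  obtain ⟨R₁, hR₁⟩ := hb.subset_closedBall (0 : Euc n)
  have hcl : closure Ω ⊆ Metric.closedBall 0 R₁ := closure_minimal hR₁ Metric.isClosed_closedBall
  obtain ⟨R₀, hR₀, hR₀1⟩ : ∃ R₀ : ℝ, 0 < R₀ ∧ R₁ < R₀ := ⟨|R₁| + 1, by positivity, by
    linarith [le_abs_self R₁]⟩
  have hout : ∀ x : Euc n, R₀ ≤ ‖x‖ → x ∈ (closure Ω)ᶜ := by
    intro x hx h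
    have := hcl h
    rw [mem_closedBall_zero_iff] at this
    linarith
  let φ : ContDiffBump (0 : Euc n) := ⟨R₀, R₀ + 1, hR₀, by linarith⟩
  have hv : ContDiff ℝ 3 (fun x => (1 - φ x) * u x) := by
    rw [contDiff_iff_contDiffAt]
    intro x
    by_cases hx : ‖x‖ < R₀
    · have : (fun x => (1 - φ x) * u x) =ᶠ[𝓝 x] fun _ => 0 := by
        have : Metric.ball (0 : Euc n) R₀ ∈ 𝓝 x := Metric.isOpen_ball.mem_nhds (by simpa using hx)
        filter_upwards [this] with z hz
        rw [φ.one_of_mem_closedBall (Metric.ball_subset_closedBall hz)]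
        simp
      exact contDiffAt_const.congr_of_eventuallyEq this
    · push Not at hx
      have hxU : x ∈ U := hUs fun h => hout x hx (subset_closure h)
      have h1 : ContDiffAt ℝ 3 u x :=
        (hUc.contDiffAt (hUo.mem_nhds hxU)).of_le (by exact_mod_cast nat_le_infty 3)
      exact (contDiffAt_const.sub φ.contDiff.contDiffAt).mul h1
  have heq : ∀ x : Euc n, R₀ + 1 < ‖x‖ → (fun x => (1 - φ x) * u x) =ᶠ[𝓝 x] u := by
    intro x hx
    have : {z : Euc n | R₀ + 1 < ‖z‖} ∈ 𝓝 x :=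
      (isOpen_lt continuous_const continuous_norm).mem_nhds hx
    filter_upwards [this] with z hz
    have : φ z = 0 := φ.zero_of_le_dist (by rw [dist_zero_right]; exact le_of_lt hz)
    simp [this]
  have hlim' : Tendsto (fun x => (1 - φ x) * u x) (cocompact (Euc n)) (𝓝 0) := by
    refine hlim.congr' ?_
    have := tendsto_norm_cocompact_atTop (E := Euc n) |>.eventually (eventually_gt_atTop (R₀ + 1))
    filter_upwards [this] with z hz
    exact (heq z hz).eq_of_nhds.symm
  obtain ⟨f, hf, h⟩ := repr_exact n hn _ hv (R₀ + 1) (by positivity) (by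
    intro y hy
    rw [lapl_congr n (heq y hy)]
    exact hharm y (hout y (by linarith))) hlim'
  refine ⟨R₀ + 1, by positivity, f, hf, fun x hx => ?_⟩
  rw [← h x hx]
  exact (heq x hx).eq_of_nhds.symm

lemma conv_homog {n : ℕ} {F : Type*} [NormedAddCommGroup F] [NormedSpace ℝ F] [CompleteSpace F]
    {f : Euc n → ℝ} (hf : Continuous f)
    {H : Euc n → F} (hH : ContDiffOn ℝ 1 H {0}ᶜ) (m : ℝ)
    (hom : ∀ t : ℝ, 0 < t → ∀ z : Euc n, z ≠ 0 → H (t • z) = t ^ m • H z) (R : ℝ) (hR : 0 < R) :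
    ∃ C ρ : ℝ, 0 < C ∧ 0 < ρ ∧ ∀ x : Euc n, ρ ≤ ‖x‖ →
      ‖(∫ y in Metric.closedBall (0 : Euc n) R, f y • H (x - y))
        - (∫ y in Metric.closedBall (0 : Euc n) R, f y) • H x‖ ≤ C * ‖x‖ ^ (m - 1) := by
  obtain ⟨C, ρ, hC, hρ, h⟩ := homog_lip hH m hom R hR
  have hK : IsCompact (Metric.closedBall (0 : Euc n) R) := isCompact_closedBall _ _
  have hfi : IntegrableOn f (Metric.closedBall (0 : Euc n) R) :=
    hf.continuousOn.integrableOn_compact hK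
  set A := ∫ y in Metric.closedBall (0 : Euc n) R, ‖f y‖ with hA
  have hA0 : 0 ≤ A := integral_nonneg fun _ => norm_nonneg _
  refine ⟨A * C + 1, ρ, by positivity, hρ, fun x hx => ?_⟩
  have hx0 : 0 < ‖x‖ := lt_of_lt_of_le hρ hx
  have hc : ContinuousOn (fun y => f y • H (x - y)) (Metric.closedBall (0 : Euc n) R) := by
    refine hf.continuousOn.smul (hH.continuousOn.comp (by fun_prop) ?_)
    intro y hy
    exact (h x y (by simpa using hy) hx).1
  rw [← integral_smul_const, ← integral_sub (hc.integrableOn_compact hK) (hfi.smul_const _)]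
  calc _ ≤ ∫ y in Metric.closedBall (0 : Euc n) R, ‖f y‖ * (C * ‖x‖ ^ (m - 1)) := by
        refine norm_integral_le_of_norm_le (hfi.norm.mul_const _) ?_
        refine (ae_restrict_iff' Metric.isClosed_closedBall.measurableSet).2 (ae_of_all _ ?_)
        intro y hy
        rw [← smul_sub, norm_smul]
        gcongr
        exact (h x y (by simpa using hy) hx).2
    _ = A * C * ‖x‖ ^ (m - 1) := by rw [integral_mul_const]; ring
    _ ≤ _ := by
        have : 0 < ‖x‖ ^ (m - 1) := by positivity
        nlinarith

lemma homog_fderiv {E F : Type*} [NormedAddCommGroup E] [NormedSpace ℝ E]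
    [NormedAddCommGroup F] [NormedSpace ℝ F] 
    {H : E → F} (m : ℝ)
    (hom : ∀ t : ℝ, 0 < t → ∀ z : E, z ≠ 0 → H (t • z) = t ^ m • H z) :
    ∀ t : ℝ, 0 < t → ∀ z : E, z ≠ 0 → fderiv ℝ H (t • z) = t ^ (m - 1) • fderiv ℝ H z := by
  intro t ht z hz
  have h1 : (fun z => H (t • z)) =ᶠ[𝓝 z] fun z => t ^ m • H z := by
    filter_upwards [isOpen_ne.mem_nhds hz] with w hw
    exact hom t ht w hw
  have h2 := h1.fderiv_eq (𝕜 := ℝ)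
  have h3 : fderiv ℝ (fun z => H (t • z)) z = t • fderiv ℝ H (t • z) := fderiv_comp_smul _
  have h4 : fderiv ℝ (fun z => t ^ m • H z) z = t ^ m • fderiv ℝ H z := by
    have := fderiv_const_smul_field (𝕜 := ℝ) (t ^ m) (f := H)
    exact congrFun this z
  rw [h3, h4] at h2
  rw [Real.rpow_sub_one ht.ne', div_eq_inv_mul, mul_smul, ← h2, smul_smul, inv_mul_cancel₀ ht.ne',
    one_smul]

lemma Pw_homog (n : ℕ) (q : ℝ) :
    ∀ t : ℝ, 0 < t → ∀ z : Euc n, z ≠ 0 → Pw n q 0 (t • z) = t ^ (2 * q) • Pw n q 0 z := by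
  intro t ht z hz
  unfold Pw
  rw [norm_smul, Real.norm_of_nonneg ht.le, add_zero, add_zero, mul_pow,
    Real.mul_rpow (by positivity) (by positivity), smul_eq_mul, Real.rpow_mul ht.le,
    ← Real.rpow_natCast t 2]
  norm_num

lemma Pw_contDiffOn (n : ℕ) (q : ℝ) (k : WithTop ℕ∞) : ContDiffOn ℝ k (Pw n q 0) {0}ᶜ := by
  intro z hz
  refine (Pw_contDiffAt n q 0 z ?_ k).contDiffWithinAt
  have : z ≠ 0 := hz
  positivity

lemma expansion (n : ℕ) (hn : 3 ≤ n) (Ω : Set (Euc n)) (hb : Bornology.IsBounded Ω)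
    (u : Euc n → ℝ) (hu : HarmExtSol n Ω u) :
    ∃ c C ρ : ℝ, 0 < C ∧ 0 < ρ ∧ ∀ x : Euc n, ρ ≤ ‖x‖ →
      |u x - c * Pw n ((2 - n) / 2) 0 x| ≤ C * ‖x‖ ^ (1 - (n : ℝ)) ∧
      ‖fderiv ℝ u x - c • fderiv ℝ (Pw n ((2 - n) / 2) 0) x‖ ≤ C * ‖x‖ ^ (- (n : ℝ)) ∧
      ‖fderiv ℝ (fderiv ℝ u) x - c • fderiv ℝ (fderiv ℝ (Pw n ((2 - n) / 2) 0)) x‖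
        ≤ C * ‖x‖ ^ (- (n : ℝ) - 1) := by
  obtain ⟨R, hR, f, hf, h⟩ := repr_u n hn Ω hb u hu
  have hG : ContDiffOn ℝ (⊤ : ℕ∞) (Pw n ((2 - n) / 2) 0) {0}ᶜ := Pw_contDiffOn n _ _
  have hhom0 := Pw_homog n ((2 - n) / 2)
  generalize Pw n ((2 - n) / 2) 0 = G at *
  have hG0 : ContDiffOn ℝ 1 G {0}ᶜ := hG.of_le (by exact_mod_cast le_top)
  have hG1 : ContDiffOn ℝ (⊤ : ℕ∞) (fderiv ℝ G) {0}ᶜ :=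
    hG.fderiv_of_isOpen isOpen_compl_singleton (by exact_mod_cast le_top)
  have hG2 : ContDiffOn ℝ 1 (fderiv ℝ (fderiv ℝ G)) {0}ᶜ :=
    hG1.fderiv_of_isOpen isOpen_compl_singleton two_le_infty
  have hhom1 := homog_fderiv _ hhom0
  have hhom2 := homog_fderiv (H := fderiv ℝ G) (2 * ((2 - (n:ℝ)) / 2) - 1) hhom1
  obtain ⟨C0, r0, hC0, hr0, k0⟩ := conv_homog hf hG0 _ hhom0 R hR
  obtain ⟨C1, r1, hC1, hr1, k1⟩ := conv_homog hf (hG1.of_le (by exact_mod_cast le_top)) _ hhom1 R hR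
  obtain ⟨C2, r2, hC2, hr2, k2⟩ := conv_homog hf hG2 _ hhom2 R hR
  have hWo : IsOpen {x : Euc n | R < ‖x‖} := isOpen_lt continuous_const continuous_norm
  have hWU : ∀ x ∈ {x : Euc n | R < ‖x‖}, ∀ y ∈ Metric.closedBall (0 : Euc n) R,
      x - y ∈ ({0}ᶜ : Set (Euc n)) := by
    intro x hx y hy h0
    have h1 : x = y := sub_eq_zero.1 h0
    subst h1
    have : ‖x‖ ≤ R := by simpa using hy
    have : R < ‖x‖ := hx
    linarith
  refine ⟨∫ y in Metric.closedBall (0 : Euc n) R, f y, C0 + C1 + C2, r0 + r1 + r2 + R,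
    by positivity, by positivity, fun x hx => ?_⟩
  have hxW : R < ‖x‖ := by linarith
  have hx0 : 0 < ‖x‖ := hR.trans hxW
  have hev : u =ᶠ[𝓝 x] fun x => ∫ y in Metric.closedBall (0 : Euc n) R, f y • G (x - y) := by
    filter_upwards [hWo.mem_nhds hxW] with z hz
    exact h z hz
  have e0 := hev.eq_of_nhds
  have e1 := hev.fderiv_eq (𝕜 := ℝ)
  have e2 := (hev.fderiv (𝕜 := ℝ)).fderiv_eq (𝕜 := ℝ)
  rw [(conv_hasFDerivAt hf R isOpen_compl_singleton hG0 x (hWU x hxW)).fderiv] at e1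
  rw [conv_fderiv2 hf R isOpen_compl_singleton hG hWo hWU x hxW] at e2
  have k0' := k0 x (by linarith)
  have k1' := k1 x (by linarith)
  have k2' := k2 x (by linarith)
  rw [← e0] at k0'
  rw [← e1] at k1'
  rw [← e2] at k2'
  have E0 : 2 * ((2 - (n:ℝ)) / 2) - 1 = 1 - n := by ring
  have E1 : 1 - (n:ℝ) - 1 = -n := by ring
  rw [E0] at k0'
  rw [E0, E1] at k1'
  rw [E0, E1] at k2'
  refine ⟨?_, ?_, ?_⟩
  · refine k0'.trans ?_
    gcongr
    linarith
  · refine k1'.trans ?_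
    gcongr
    linarith
  · refine k2'.trans ?_
    gcongr
    linarith

lemma lapl_translate (n : ℕ) (g : Euc n → ℝ) (p x : Euc n) :
    lapl n (fun x => g (x - p)) x = lapl n g (x - p) := by
  have h1 : fderiv ℝ (fun x => g (x - p)) = fun x => fderiv ℝ g (x - p) := by
    funext z
    exact fderiv_comp_sub p
  rw [lapl_eq', lapl_eq', h1]
  have h2 : fderiv ℝ (fun x => fderiv ℝ g (x - p)) x = fderiv ℝ (fderiv ℝ g) (x - p) :=
    fderiv_comp_sub p
  rw [h2]

lemma lower_bound (n : ℕ) (hn : 3 ≤ n) (Ω : Set (Euc n)) (ho : IsOpen Ω) (hne : Ω.Nonempty)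
    (u : Euc n → ℝ) (hu : HarmExtSol n Ω u) :
    ∃ (p : Euc n) (A : ℝ), 0 < A ∧ ∀ x ∈ Ωᶜ, A * Pw n ((2 - n) / 2) 0 (x - p) ≤ u x := by
  have hn' : (3:ℝ) ≤ n := by exact_mod_cast hn
  have hq : (2 - (n:ℝ)) / 2 < 0 := by linarith
  obtain ⟨⟨U, hUo, hUs, hUc⟩, hharm, hbd, hlim⟩ := hu
  obtain ⟨p, hp⟩ := hne
  obtain ⟨d, hd, hdΩ⟩ := Metric.isOpen_iff.1 ho p hp
  have hdist : ∀ x ∈ Ωᶜ, d ≤ ‖x - p‖ := by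
    intro x hx
    by_contra hlt
    push Not at hlt
    exact hx (hdΩ (by rwa [Metric.mem_ball, dist_eq_norm]))
  have hpos : ∀ x ∈ Ωᶜ, 0 < ‖x - p‖ ^ 2 + 0 := by
    intro x hx
    have := hdist x hx
    have : 0 < ‖x - p‖ := by linarith
    positivity
  set A : ℝ := ((d ^ 2) ^ ((2 - (n:ℝ)) / 2))⁻¹ with hA
  have hApos : 0 < A := by positivity
  have hAle : ∀ x ∈ Ωᶜ, A * Pw n ((2 - n) / 2) 0 (x - p) ≤ 1 := by
    intro x hx
    rw [hA, inv_mul_le_iff₀ (by positivity), mul_one]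
    unfold Pw
    rw [add_zero]
    have := hdist x hx
    exact Real.rpow_le_rpow_of_nonpos (by positivity) (by gcongr) hq.le
  have hP1 : ∀ x, Pw n ((2 - n) / 2) 1 x ≤ 1 := by
    intro x
    have := Pw_le n _ 1 hq one_pos x
    simpa using this
  refine ⟨p, A, hApos, fun x hx => ?_⟩
  have hne0 : ∀ x ∈ Ωᶜ, ContDiffAt ℝ 2 (fun x => Pw n ((2 - n) / 2) 0 (x - p)) x := by
    intro x hx
    have h1 := Pw_contDiffAt n ((2 - n) / 2) 0 (x - p) (hpos x hx) 2
    exact h1.comp x (contDiffAt_id.sub contDiffAt_const)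
  have hP1c : ContDiff ℝ 2 (Pw n ((2 - n) / 2) 1) := Pw_contDiff n _ 1 one_pos 2
  have hul : ∀ x ∈ Ωᶜ, ContDiffAt ℝ 2 u x := by
    intro x hx
    exact (hUc.contDiffAt (hUo.mem_nhds (hUs hx))).of_le (by exact_mod_cast nat_le_infty 2)
  have key : ∀ δ : ℝ, 0 < δ → 0 ≤ (u x + (-A) * Pw n ((2 - n) / 2) 0 (x - p))
      + δ * Pw n ((2 - n) / 2) 1 x := by
    intro δ hδ
    have hsm : ∀ x ∈ Ωᶜ, ContDiffAt ℝ 2 (fun x => (u x + (-A) * Pw n ((2 - n) / 2) 0 (x - p))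
      + δ * Pw n ((2 - n) / 2) 1 x) x := by
      intro x hx
      exact ((hul x hx).add (contDiffAt_const.mul (hne0 x hx))).add
        (contDiffAt_const.mul hP1c.contDiffAt)
    refine strictMP n Ωᶜ ho.isClosed_compl
      (fun x => (u x + (-A) * Pw n ((2 - n) / 2) 0 (x - p)) + δ * Pw n ((2 - n) / 2) 1 x)
      (fun x hx => (hsm x hx).continuousAt.continuousWithinAt) ?_ ?_ x hx
    · have t1 := Pw_tendsto_zero n _ 0 hq
      have t1' : Tendsto (fun x : Euc n => x - p) (cocompact _) (cocompact _) :=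
        (Homeomorph.subRight p).isClosedEmbedding.tendsto_cocompact
      have t2 := Pw_tendsto_zero n _ 1 hq
      have := (hlim.add ((t1.comp t1').const_mul (-A))).add (t2.const_mul δ)
      simpa [Function.comp_def] using this
    · intro x hx
      by_cases hxc : x ∈ closure Ω
      · left
        have hf : x ∈ frontier Ω := by
          rw [ho.frontier_eq]; exact ⟨hxc, hx⟩
        have h1 := hbd x hf
        have h2 := hAle x hx
        have h3 := Pw_pos n ((2 - n) / 2) 1 x (by positivity)
        have h4 : 0 < δ * Pw n ((2 - n) / 2) 1 x := by positivity
        simp only [h1]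
        linarith
      · right
        refine ⟨?_, hsm x hx, ?_⟩
        · exact mem_of_superset (isClosed_closure.isOpen_compl.mem_nhds hxc)
            (Set.compl_subset_compl.2 subset_closure)
        · have l0 := lapl_Pw n 0 (x - p) (hpos x hx)
          have l1 := lapl_Pw n 1 x (by positivity)
          rw [lapl_add n ((hul x hx).add (contDiffAt_const.mul (hne0 x hx)))
            (contDiffAt_const.mul hP1c.contDiffAt),
            lapl_add n (hul x hx) (contDiffAt_const.mul (hne0 x hx)),
            lapl_const_mul n _ (hne0 x hx), lapl_const_mul n _ hP1c.contDiffAt,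
            lapl_translate n, hharm x hxc, l0, l1]
          have h3 := Pw_pos n (-((n:ℝ) + 2) / 2) 1 x (by positivity)
          have h5 : 0 < (n:ℝ) * (n - 2) := by nlinarith
          have h4 : 0 < δ * ((n:ℝ) * (n - 2) * Pw n (-((n:ℝ) + 2) / 2) 1 x) := by positivity
          nlinarith
  by_contra hlt
  push Not at hlt
  have hk := key ((A * Pw n ((2 - n) / 2) 0 (x - p) - u x) / 2) (by linarith)
  have := hP1 x
  nlinarith

lemma coef_pos (n : ℕ) (hn : 3 ≤ n) (Ω : Set (Euc n)) (ho : IsOpen Ω) (hne : Ω.Nonempty)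
    (hb : Bornology.IsBounded Ω)
    (u : Euc n → ℝ) (hu : HarmExtSol n Ω u) (c C ρ : ℝ) (hC : 0 < C)
    (h : ∀ x : Euc n, ρ ≤ ‖x‖ →
      |u x - c * Pw n ((2 - n) / 2) 0 x| ≤ C * ‖x‖ ^ (1 - (n : ℝ))) : 0 < c := by
  have hn' : (3:ℝ) ≤ n := by exact_mod_cast hn
  have hq : (2 - (n:ℝ)) / 2 < 0 := by linarith
  obtain ⟨p, A, hA, hlow⟩ := lower_bound n hn Ω ho hne u hu
  obtain ⟨R₁, hR₁⟩ := hb.subset_closedBall (0 : Euc n)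
  set B : ℝ := A * (2 : ℝ) ^ (2 - (n:ℝ)) with hB
  have hBpos : 0 < B := by positivity
  by_contra hc
  push Not at hc
  obtain ⟨r, hr⟩ : ∃ r : ℝ, |ρ| + |R₁| + 1 + ‖p‖ + C / B < r := ⟨_, lt_add_one _⟩
  have hCB : 0 < C / B := by positivity
  have a1 := le_abs_self ρ
  have a2 := le_abs_self R₁
  have a3 := abs_nonneg ρ
  have a4 := abs_nonneg R₁
  have a5 := norm_nonneg p
  have hr0 : 0 < r := by linarith
  obtain ⟨x, hx⟩ : ∃ x : Euc n, ‖x‖ = r := by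
    refine ⟨r • ebasis n ⟨0, by omega⟩, ?_⟩
    rw [norm_smul, Real.norm_of_nonneg hr0.le]
    simp [ebasis]
  have hxΩ : x ∈ Ωᶜ := by
    intro hmem
    have := hR₁ hmem
    rw [mem_closedBall_zero_iff] at this
    linarith
  have h1 := h x (by linarith)
  have h2 := hlow x hxΩ
  have h3 : Pw n ((2 - n) / 2) 0 x = r * r ^ (1 - (n:ℝ)) := by
    unfold Pw
    rw [hx, add_zero, ← Real.rpow_natCast r 2, ← Real.rpow_mul hr0.le]
    conv_rhs => rw [← Real.rpow_one_add' hr0.le (by linarith)]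
    congr 1
    push_cast; ring
  have hxp : ‖x - p‖ ≤ 2 * r := by
    have := norm_sub_le x p
    linarith
  have hxp0 : 0 < ‖x - p‖ := by
    have := norm_sub_norm_le x p
    linarith
  have h4 : (2:ℝ) ^ (2 - (n:ℝ)) * (r * r ^ (1 - (n:ℝ))) ≤ Pw n ((2 - n) / 2) 0 (x - p) := by
    have e : (2:ℝ) ^ (2 - (n:ℝ)) * (r * r ^ (1 - (n:ℝ))) = ((2 * r) ^ 2) ^ ((2 - (n:ℝ)) / 2) := by
      rw [← Real.rpow_natCast (2 * r) 2, ← Real.rpow_mul (by positivity),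
        ← Real.rpow_one_add' hr0.le (by linarith), show (1 + (1 - (n:ℝ))) = 2 - n by ring,
        ← Real.mul_rpow (by norm_num) hr0.le]
      congr 1
      push_cast; ring
    rw [e]
    unfold Pw
    rw [add_zero]
    exact Real.rpow_le_rpow_of_nonpos (by positivity) (by gcongr) hq.le
  rw [h3, hx] at h1
  set S := r ^ (1 - (n:ℝ)) with hS
  have hSpos : 0 < S := by positivity
  have h5 : B * (r * S) ≤ u x := by
    calc B * (r * S) = A * ((2:ℝ) ^ (2 - (n:ℝ)) * (r * S)) := by rw [hB]; ring
      _ ≤ _ := by gcongr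
      _ ≤ _ := h2
  have h6 := (abs_le.1 h1).2
  have h7 : c * (r * S) ≤ 0 := mul_nonpos_of_nonpos_of_nonneg hc (by positivity)
  have h8 : B * r * S ≤ C * S := by linarith
  have h9 : B * r ≤ C := le_of_mul_le_mul_right h8 hSpos
  have h10 : C / B < r := by linarith
  rw [div_lt_iff₀ hBpos] at h10
  linarith

/-- curvature expression as a function of gradient and Hessian entries -/
noncomputable def Qm (n : ℕ) (z : (Fin n → ℝ) × (Fin n → Fin n → ℝ)) : ℝ :=
  (-1 : ℝ) ^ (n - 1) * (∑ i, z.1 i ^ 2) ^ (-((n : ℝ) + 1) / 2) *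
    ∑ α : Fin n, ∑ β : Fin n, (Matrix.of z.2).adjugate α β * z.1 α * z.1 β

lemma Qm_contDiffOn (n : ℕ) :
    ContDiffOn ℝ 1 (Qm n) {z | 0 < ∑ i, z.1 i ^ 2} := by
  have hc : ∀ i, ContDiff ℝ 1 (fun z : (Fin n → ℝ) × (Fin n → Fin n → ℝ) => z.1 i) := by
    intro i; fun_prop
  have hm : ∀ i j, ContDiff ℝ 1 (fun z : (Fin n → ℝ) × (Fin n → Fin n → ℝ) => z.2 i j) := by
    intro i j; fun_prop
  have ha : ∀ α β, ContDiff ℝ 1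
      (fun z : (Fin n → ℝ) × (Fin n → Fin n → ℝ) => (Matrix.of z.2).adjugate α β) := by
    intro α β
    simp only [Matrix.adjugate_apply, Matrix.det_apply]
    refine ContDiff.sum fun σ _ => ?_
    refine ContDiff.const_smul _ ?_
    refine contDiff_prod fun i _ => ?_
    simp only [Matrix.updateRow_apply]
    by_cases h : σ i = β
    · simp only [h, if_true]; exact contDiff_const
    · simp only [h, if_false, Matrix.of_apply]; exact hm _ _
  intro z hz
  refine ContDiffAt.contDiffWithinAt ?_
  unfold Qm
  refine ContDiffAt.mul (ContDiffAt.mul contDiffAt_const ?_) ?_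
  · refine ContDiffAt.rpow_const_of_ne ?_ (ne_of_gt hz)
    exact (ContDiff.sum fun i _ => (hc i).pow 2).contDiffAt
  · exact (ContDiff.sum fun α _ => ContDiff.sum fun β _ =>
      ((ha α β).mul (hc α)).mul (hc β)).contDiffAt

lemma Qm_scale (n : ℕ) (hn : 3 ≤ n) (p : Fin n → ℝ) (M : Fin n → Fin n → ℝ) (s t : ℝ) (hs : 0 < s)
    (ht : 0 < t) : Qm n (s • p, t • M) = (t / s) ^ (n - 1) * Qm n (p, M) := by
  unfold Qm
  have h1 : (∑ i, (s • p) i ^ 2) = s ^ 2 * ∑ i, p i ^ 2 := by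
    simp only [Pi.smul_apply, smul_eq_mul, mul_pow, Finset.mul_sum]
  have h2 : (Matrix.of (t • M)).adjugate = t ^ (n - 1) • (Matrix.of M).adjugate := by
    rw [show Matrix.of (t • M) = t • Matrix.of M from rfl, Matrix.adjugate_smul]
    simp
  have h3 : (∑ α : Fin n, ∑ β : Fin n, (t ^ (n - 1) • (Matrix.of M).adjugate) α β
      * (s • p) α * (s • p) β) = t ^ (n - 1) * s ^ 2 *
      ∑ α : Fin n, ∑ β : Fin n, (Matrix.of M).adjugate α β * p α * p β := by
    simp only [Finset.mul_sum]
    refine Finset.sum_congr rfl fun α _ => Finset.sum_congr rfl fun β _ => ?_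
    simp only [Matrix.smul_apply, Pi.smul_apply, smul_eq_mul]
    ring
  dsimp only
  rw [h1, h2, h3, Real.mul_rpow (by positivity) (Finset.sum_nonneg fun i _ => sq_nonneg _)]
  have h4 : (s ^ 2) ^ (-((n : ℝ) + 1) / 2) * s ^ 2 = (s ^ (n - 1))⁻¹ := by
    rw [← Real.rpow_natCast s 2, ← Real.rpow_mul hs.le, ← Real.rpow_add hs,
      ← Real.rpow_natCast s (n - 1), ← Real.rpow_neg hs.le]
    congr 1
    rw [Nat.cast_sub (by omega)]
    push_cast; ring
  rw [div_pow, div_eq_mul_inv (t ^ (n - 1)), ← h4]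
  ring

lemma Qm_model (n : ℕ) (hn : 3 ≤ n) (e : Fin n → ℝ) (he : ∑ i, e i ^ 2 = 1) (κ : ℝ) (hκ : κ < 0) :
    Qm n (fun i => κ * e i, fun i j => κ * ((if i = j then 1 else 0) - n * e i * e j)) = 1 := by
  have hn' : (3:ℝ) ≤ n := by exact_mod_cast hn
  set M : Matrix (Fin n) (Fin n) ℝ := κ • (1 + Matrix.vecMulVec (-(n:ℝ) • e) e) with hM
  have hMe : (Matrix.of fun i j => κ * ((if i = j then 1 else 0) - n * e i * e j)) = M := by
    ext i j
    simp [hM, Matrix.vecMulVec_apply, Matrix.one_apply]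
    split_ifs <;> ring
  have hdot : e ⬝ᵥ e = 1 := by
    rw [← he]; simp [dotProduct, pow_two]
  have h1 : M.mulVec e = (κ * (1 - n)) • e := by
    rw [hM, Matrix.smul_mulVec, Matrix.add_mulVec, Matrix.one_mulVec, Matrix.vecMulVec_mulVec, hdot]
    ext i
    simp
    ring
  have h2 : M.det = κ ^ n * (1 - n) := by
    rw [hM, Matrix.det_smul, Matrix.vecMulVec_eq Unit, Matrix.det_one_add_replicateCol_mul_replicateRow]
    rw [dotProduct_smul, hdot, Fintype.card_fin, smul_eq_mul]
    ring
  have h3 : M.adjugate.mulVec e = κ ^ (n - 1) • e := by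
    have h := congrArg (fun A : Matrix (Fin n) (Fin n) ℝ => A.mulVec e) M.adjugate_mul
    simp only [← Matrix.mulVec_mulVec, h1, Matrix.mulVec_smul, Matrix.smul_mulVec,
      Matrix.one_mulVec, h2] at h
    have hne : κ * (1 - (n:ℝ)) ≠ 0 := by
      apply mul_ne_zero hκ.ne; linarith
    have e2 : κ ^ n * (1 - (n:ℝ)) = (κ * (1 - n)) * κ ^ (n - 1) := by
      obtain ⟨k, rfl⟩ : ∃ k, n = k + 1 := ⟨n - 1, by omega⟩
      simp [pow_succ]; ring
    rw [e2, mul_smul] at h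
    refine smul_right_injective _ hne ?_
    simpa only [mul_smul] using h
  unfold Qm
  dsimp only
  rw [hMe]
  have h4 : (∑ α : Fin n, ∑ β : Fin n, M.adjugate α β * (κ * e α) * (κ * e β)) = κ ^ (n + 1) := by
    have : ∀ α, ∑ β, M.adjugate α β * (κ * e α) * (κ * e β) = κ ^ (n + 1) * e α ^ 2 := by
      intro α
      have h := congrFun h3 α
      simp only [Matrix.mulVec, dotProduct, Pi.smul_apply, smul_eq_mul] at h
      calc _ = κ ^ 2 * e α * ∑ β, M.adjugate α β * e β := by
            rw [Finset.mul_sum]; refine Finset.sum_congr rfl fun β _ => ?_; ring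
        _ = _ := by
            rw [h]
            obtain ⟨k, rfl⟩ : ∃ k, n = k + 1 := ⟨n - 1, by omega⟩
            simp [pow_succ]; ring
    rw [Finset.sum_congr rfl fun α _ => this α, ← Finset.mul_sum, he, mul_one]
  have h5 : ∑ i, (κ * e i) ^ 2 = (-κ) ^ 2 := by
    simp only [mul_pow, ← Finset.mul_sum, he]; ring
  have hk : 0 < -κ := by linarith
  rw [h4, h5, ← Real.rpow_natCast (-κ) 2, ← Real.rpow_mul hk.le]
  have h6 : (-1:ℝ) ^ (n - 1) * κ ^ (n + 1) = (-κ) ^ (n + 1) := by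
    obtain ⟨k, rfl⟩ : ∃ k, n = k + 1 := ⟨n - 1, by omega⟩
    rw [neg_pow κ]
    simp [pow_succ]
  rw [mul_right_comm, h6, ← Real.rpow_natCast (-κ) (n + 1), ← Real.rpow_add hk]
  have : ((n + 1 : ℕ) : ℝ) + ((2 : ℕ) : ℝ) * (-((n : ℝ) + 1) / 2) = 0 := by push_cast; ring
  rw [this, Real.rpow_zero]

lemma inner_ebasis_right (n : ℕ) (e : Euc n) (i : Fin n) : inner ℝ e (ebasis n i) = e i := by
  unfold ebasis
  rw [EuclideanSpace.inner_single_right]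
  simp

lemma norm_dual_sq (n : ℕ) (p : Euc n →L[ℝ] ℝ) : ‖p‖ ^ 2 = ∑ i, (p (ebasis n i)) ^ 2 := by
  obtain ⟨w, rfl⟩ := (InnerProductSpace.toDual ℝ (Euc n)).surjective p
  rw [LinearIsometryEquiv.norm_map, EuclideanSpace.norm_sq_eq]
  refine Finset.sum_congr rfl fun i _ => ?_
  rw [InnerProductSpace.toDual_apply_apply, inner_ebasis_right]
  simp

lemma gaussK_eq_Qm (n : ℕ) (u : Euc n → ℝ) (x : Euc n) :
    gaussK n u x = Qm n (fun i => fderiv ℝ u x (ebasis n i),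
      fun i j => fderiv ℝ (fderiv ℝ u) x (ebasis n i) (ebasis n j)) := by
  unfold gaussK Qm
  dsimp only
  rw [← norm_dual_sq, ← Real.rpow_natCast (‖fderiv ℝ u x‖) 2, ← Real.rpow_mul (norm_nonneg _)]
  have h1 : hessMat n u x
      = Matrix.of fun i j => fderiv ℝ (fderiv ℝ u) x (ebasis n i) (ebasis n j) := by
    ext i j; rw [hessMat_apply']; rfl
  have h2 : ((2:ℕ):ℝ) * (-((n:ℝ) + 1) / 2) = -((n:ℝ) + 1) := by push_cast; ring
  rw [h1, h2]

lemma Pw_deriv_sphere (n : ℕ) (e : Euc n) (he : ‖e‖ = 1) (i j : Fin n) :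
    fderiv ℝ (Pw n ((2 - n) / 2) 0) e (ebasis n i) = (2 - n) * e i ∧
    fderiv ℝ (fderiv ℝ (Pw n ((2 - n) / 2) 0)) e (ebasis n i) (ebasis n j)
      = (2 - n) * ((if i = j then 1 else 0) - n * e i * e j) := by
  have hz : 0 < ‖e‖ ^ 2 + 0 := by rw [he]; norm_num
  have hP : ∀ q, Pw n q 0 e = 1 := by intro q; simp [Pw, he]
  have hin : ∀ i, inner ℝ e (ebasis n i) = e i := inner_ebasis_right n e
  have hij : inner ℝ (ebasis n i) (ebasis n j) = if i = j then (1:ℝ) else 0 := by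
    rw [inner_ebasis_right]
    simp [ebasis, eq_comm]
  constructor
  · rw [(Pw_hasFDerivAt n _ 0 e hz).fderiv, hP]
    have : ((2 * ((2 - (n:ℝ)) / 2) * 1) • innerSL ℝ e) (ebasis n i)
      = (2 * ((2 - (n:ℝ)) / 2) * 1) * inner ℝ e (ebasis n i) := rfl
    rw [this, hin]; ring
  · rw [Pw_fderiv_fderiv n _ 0 e hz, hP, hP, hin, hin, hij]; ring

lemma clm_entry_bound (n : ℕ) (p : Euc n →L[ℝ] ℝ) (i : Fin n) : |p (ebasis n i)| ≤ ‖p‖ := by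
  have h := p.le_opNorm (ebasis n i)
  have h2 : ‖ebasis n i‖ = 1 := by simp [ebasis]
  rw [h2, mul_one] at h
  exact h

lemma clm2_entry_bound (n : ℕ) (p : Euc n →L[ℝ] Euc n →L[ℝ] ℝ) (i j : Fin n) :
    |p (ebasis n i) (ebasis n j)| ≤ ‖p‖ := by
  have h := p.le_opNorm (ebasis n i)
  have h2 : ‖ebasis n i‖ = 1 := by simp [ebasis]
  rw [h2, mul_one] at h
  exact (clm_entry_bound n _ j).trans h

/-- Lemma 5.2: asymptotics of the Gaussian curvature of the level sets:
`K(x) = |x|^{1-n} + O(|x|^{-n})` as `|x| → ∞`. -/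
theorem statement18 (n : ℕ) (hn : 3 ≤ n) (Ω : Set (Euc n))
    (hΩ : SmoothStrictConvexDomain n Ω)
    (u : Euc n → ℝ) (hu : HarmExtSol n Ω u)
    (hgrad : ∀ x ∈ Ωᶜ, fderiv ℝ u x ≠ 0) :
    ∃ C ρ₀ : ℝ, 0 < C ∧ 0 < ρ₀ ∧
      ∀ x : Euc n, ρ₀ ≤ ‖x‖ →
        |gaussK n u x - ‖x‖ ^ (1 - (n : ℝ))| ≤ C * ‖x‖ ^ (-(n : ℝ)) := by
  obtain ⟨ho, hb, hne, -⟩ := hΩ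
  have hn' : (3:ℝ) ≤ n := by exact_mod_cast hn
  obtain ⟨c, C, ρ, hC, hρ, hexp⟩ := expansion n hn Ω hb u hu
  have hc : 0 < c := coef_pos n hn Ω ho hne hb u hu c C ρ hC fun x hx => (hexp x hx).1
  obtain ⟨κ, hκ⟩ : ∃ κ : ℝ, κ = c * (2 - n) := ⟨_, rfl⟩
  have hκ0 : κ < 0 := by rw [hκ]; nlinarith
  let Φ : Euc n → (Fin n → ℝ) × (Fin n → Fin n → ℝ) := fun e =>
    (fun i => κ * e i, fun i j => κ * ((if i = j then 1 else 0) - n * e i * e j))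
  have hΦc : Continuous Φ := by
    refine Continuous.prodMk ?_ ?_
    · exact continuous_pi fun i => by fun_prop
    · exact continuous_pi fun i => continuous_pi fun j => by fun_prop
  have hsum : ∀ e : Euc n, ‖e‖ = 1 → ∑ i, e i ^ 2 = 1 := by
    intro e he
    have := EuclideanSpace.norm_sq_eq e
    rw [he] at this
    simpa using this.symm
  have hUo : IsOpen {z : (Fin n → ℝ) × (Fin n → Fin n → ℝ) | 0 < ∑ i, z.1 i ^ 2} :=
    isOpen_lt continuous_const (by fun_prop)
  obtain ⟨L, δ, hL, hδ, hlip⟩ := lip_near_compact (Q := Qm n) hUo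
    ((isCompact_sphere (0 : Euc n) 1).image hΦc) (by
      rintro _ ⟨e, he, rfl⟩
      have he1 := hsum e (by simpa using he)
      have : ∑ i, (κ * e i) ^ 2 = κ ^ 2 := by simp only [mul_pow, ← Finset.mul_sum, he1, mul_one]
      show 0 < ∑ i, (κ * e i) ^ 2
      rw [this]
      exact sq_pos_of_neg hκ0) (Qm_contDiffOn n)
  refine ⟨L * C, ρ + C / δ, by positivity, by positivity, fun x hx => ?_⟩
  have hCδ : 0 < C / δ := by positivity
  obtain ⟨r, hr⟩ : ∃ r, r = ‖x‖ := ⟨_, rfl⟩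
  have hr0 : 0 < r := by linarith
  have hrρ : ρ ≤ ‖x‖ := by linarith
  obtain ⟨-, hb1, hb2⟩ := hexp x hrρ
  obtain ⟨e, he⟩ : ∃ e : Euc n, e = r⁻¹ • x := ⟨_, rfl⟩
  have hxe : x = r • e := by rw [he, smul_smul, mul_inv_cancel₀ hr0.ne', one_smul]
  have hen : ‖e‖ = 1 := by
    rw [he, norm_smul, norm_inv, Real.norm_of_nonneg hr0.le, ← hr, inv_mul_cancel₀ hr0.ne']
  have he0 : e ≠ 0 := by
    intro h; rw [h, norm_zero] at hen; exact zero_ne_one hen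
  have hhom0 := Pw_homog n ((2 - n) / 2)
  have hsph := Pw_deriv_sphere n e hen
  have hhom1 := homog_fderiv _ hhom0
  have hhom2 := homog_fderiv (H := fderiv ℝ (Pw n ((2 - n) / 2) 0)) (2 * ((2 - (n:ℝ)) / 2) - 1) hhom1
  have g1 := hhom1 r hr0 e he0
  have g2 := hhom2 r hr0 e he0
  have E0 : 2 * ((2 - (n:ℝ)) / 2) - 1 = 1 - n := by ring
  have E1 : 1 - (n:ℝ) - 1 = -n := by ring
  rw [E0, ← hxe] at g1
  rw [E0, E1, ← hxe] at g2
  rw [g1, ← hr] at hb1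
  rw [g2, ← hr] at hb2
  rw [← hr]
  obtain ⟨s, hs⟩ : ∃ s, s = r ^ (1 - (n:ℝ)) := ⟨_, rfl⟩
  obtain ⟨t, ht⟩ : ∃ t, t = r ^ (-(n:ℝ)) := ⟨_, rfl⟩
  have hs0 : 0 < s := by rw [hs]; positivity
  have ht0 : 0 < t := by rw [ht]; positivity
  have hst : s = r * t := by
    rw [hs, ht, ← Real.rpow_one_add' hr0.le (by linarith)]; congr 1
  have ht2 : r ^ (-(n:ℝ) - 1) = t / r := by rw [ht, Real.rpow_sub_one hr0.ne']
  rw [← hs, ← ht] at hb1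
  rw [← ht, ht2] at hb2
  rw [← hs, ← ht]
  have hd1 : ∀ i, |fderiv ℝ u x (ebasis n i) - s * (κ * e i)| ≤ C * t := by
    intro i
    have := (clm_entry_bound n _ i).trans hb1
    have e3 : (fderiv ℝ u x - c • s • fderiv ℝ (Pw n ((2 - n) / 2) 0) e) (ebasis n i)
        = fderiv ℝ u x (ebasis n i) - c * (s * fderiv ℝ (Pw n ((2 - n) / 2) 0) e (ebasis n i)) := rfl
    rw [e3, (hsph i i).1] at this
    have e4 : s * (κ * e i) = c * (s * ((2 - n) * e i)) := by rw [hκ]; ring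
    rw [e4]
    exact this
  have hd2 : ∀ i j, |fderiv ℝ (fderiv ℝ u) x (ebasis n i) (ebasis n j)
      - t * (κ * ((if i = j then 1 else 0) - n * e i * e j))| ≤ C * (t / r) := by
    intro i j
    have := (clm2_entry_bound n _ i j).trans hb2
    have e3 : (fderiv ℝ (fderiv ℝ u) x - c • t • fderiv ℝ (fderiv ℝ (Pw n ((2 - n) / 2) 0)) e)
          (ebasis n i) (ebasis n j)
        = fderiv ℝ (fderiv ℝ u) x (ebasis n i) (ebasis n j)
          - c * (t * fderiv ℝ (fderiv ℝ (Pw n ((2 - n) / 2) 0)) e (ebasis n i) (ebasis n j)) := rfl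
    rw [e3, (hsph i j).2] at this
    have e4 : t * (κ * ((if i = j then 1 else 0) - n * e i * e j))
        = c * (t * ((2 - n) * ((if i = j then 1 else 0) - n * e i * e j))) := by rw [hκ]; ring
    rw [e4]
    exact this
  rw [gaussK_eq_Qm]
  generalize hp : (fun i => fderiv ℝ u x (ebasis n i)) = p
  generalize hM : (fun i j => fderiv ℝ (fderiv ℝ u) x (ebasis n i) (ebasis n j)) = M
  have hd1' : ∀ i, |p i - s * (κ * e i)| ≤ C * t := by rw [← hp]; exact hd1
  have hd2' : ∀ i j, |M i j - t * (κ * ((if i = j then 1 else 0) - n * e i * e j))|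
    ≤ C * (t / r) := by rw [← hM]; exact hd2
  clear hd1 hd2 hp hM hb1 hb2 g1 g2 hhom0 hhom1 hhom2 hsph
  have hz : ‖(s⁻¹ • p, t⁻¹ • M) - Φ e‖ ≤ C / r := by
    rw [Prod.norm_def, max_le_iff]
    have hCr : 0 ≤ C / r := by positivity
    constructor
    · refine (pi_norm_le_iff_of_nonneg hCr).2 fun i => ?_
      show |s⁻¹ * p i - κ * e i| ≤ _
      have h1 : s⁻¹ * p i - κ * e i = s⁻¹ * (p i - s * (κ * e i)) := by field_simp
      rw [h1, abs_mul, abs_of_pos (inv_pos.2 hs0), inv_mul_le_iff₀ hs0]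
      refine (hd1' i).trans (le_of_eq ?_)
      rw [hst]; field_simp
    · refine (pi_norm_le_iff_of_nonneg hCr).2 fun i => (pi_norm_le_iff_of_nonneg hCr).2 fun j => ?_
      show |t⁻¹ * M i j - κ * ((if i = j then 1 else 0) - n * e i * e j)| ≤ _
      have h1 : t⁻¹ * M i j - κ * ((if i = j then 1 else 0) - n * e i * e j)
        = t⁻¹ * (M i j - t * (κ * ((if i = j then 1 else 0) - n * e i * e j))) := by
        rw [mul_sub t⁻¹, inv_mul_cancel_left₀ ht0.ne']
      rw [h1, abs_mul, abs_of_pos (inv_pos.2 ht0), inv_mul_le_iff₀ ht0]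
      refine (hd2' i j).trans (le_of_eq ?_)
      ring
  have hCrδ : C / r ≤ δ := by
    rw [div_le_iff₀ hr0, mul_comm, ← div_le_iff₀ hδ]; linarith
  have hfin := (hlip (Φ e) ⟨e, by simpa using hen, rfl⟩ (s⁻¹ • p, t⁻¹ • M) (hz.trans hCrδ)).2.2
  have hmod : Qm n (Φ e) = 1 := Qm_model n hn (fun i => e i) (hsum e hen) κ hκ0
  rw [hmod] at hfin
  have hsc : Qm n (p, M) = s * Qm n (s⁻¹ • p, t⁻¹ • M) := by
    have h1 := Qm_scale n hn (s⁻¹ • p) (t⁻¹ • M) s t hs0 ht0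
    rw [smul_inv_smul₀ hs0.ne', smul_inv_smul₀ ht0.ne'] at h1
    rw [h1]
    congr 1
    have : t / s = r⁻¹ := by rw [hst]; field_simp
    rw [this, hs, ← Real.rpow_natCast, Real.inv_rpow hr0.le, ← Real.rpow_neg hr0.le,
      Nat.cast_sub (by omega)]
    congr 1
    push_cast; ring
  rw [hsc]
  calc |s * Qm n (s⁻¹ • p, t⁻¹ • M) - s| = s * ‖Qm n (s⁻¹ • p, t⁻¹ • M) - 1‖ := by
        rw [Real.norm_eq_abs, ← abs_of_pos hs0, ← abs_mul, abs_of_pos hs0]; congr 1; ring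
    _ ≤ s * (L * (C / r)) := by
        gcongr
        exact hfin.trans (by gcongr)
    _ = L * C * t := by rw [hst]; field_simp
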